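/- arXiv:1503.08057 — 3 statements merged into one kernel-verified Lean document; each statement's English description precedes it below -/
import Mathlib

section
/- Let G be a connected graph containing no triangle, no induced cycle of length 5, and no induced cycle of even length at least 6, and let v be any vertex of G. For every integer δ such that χ(G) ≥ δ ≥ 18, there exists a PCP of order 1 in G with origin v and leftovers at least δ/2 − 8. -/
/-! Let `N_k` be a level of the `v`-levelling whose chromatic number is at least half that of `G`
(levels of equal parity are pairwise anticomplete), and let `D` be a component of `N_k` carrying
this chromatic number. Take any edge `xz` inside `D`, and let `u`, `t` be neighbours of `x`, `z`
in the previous level; these are distinct since `G` has no triangle. Let `B` consist of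
`x`, `z` and of a geodesic from `v` to each of `u`, `t`; it is `4`-colourable, because it is covered
by two induced paths. Inside `B` there are induced paths of both parities from `v` to `x`
(through `u`, or through `t` and `z`), and also from `v` to `u`: the geodesic, together with
`v … t u` if `u` and `t` are adjacent and `v … t z x u` otherwise (`exists_block`). By symmetry
the same holds for `z` and `t`.

Every neighbourhood is stable, so deleting the neighbours of `u, x, z, t` from `D` costs at most
`4` colours. Let `C` be a component of high chromatic number of what remains, and let `q ∈ D` be a
deleted vertex with a neighbour in `C` (`exists_separated_component`). If `q` has exactly one
neighbour `y` among `u, x, z, t`, then `B` is the regular block, `y` is its exit, and the PCP leaves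
through `q` into `C`. Otherwise, having no triangle and no induced `5`-cycle leaves only
`q ~ u, z` or `q ~ t, x`. In the first situation `q` takes over the role of `x` and becomes itself
the exit of the block (`pcp_of_attached`); the second one is symmetric. Each step along the exit
path costs one further colour, in order that each path vertex have only one neighbour in the
last block (`pcp_of_block`). -/

open SimpleGraph

/-- The chromatic number of `G`, as a natural number. -/
noncomputable def chi {V : Type} (G : SimpleGraph V) : ℕ := G.chromaticNumber.toNat

/-- The chromatic number of the subgraph of `G` induced by the vertex set `A`. -/
noncomputable def chiSet {V : Type} (G : SimpleGraph V) (A : Set V) : ℕ :=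
  (G.induce A).chromaticNumber.toNat

/-- `G` contains no induced cycle of length `n`: there is no graph embedding
(induced-subgraph embedding) of the `n`-cycle into `G`. -/
def NoInducedCycle {V : Type} (G : SimpleGraph V) (n : ℕ) : Prop :=
  IsEmpty (cycleGraph n ↪g G)

/-- The `k`-th level of the `v`-levelling: vertices at distance exactly `k` from `v`. -/
def level {V : Type} (G : SimpleGraph V) (v : V) (k : ℕ) : Set V :=
  {x | G.Reachable v x ∧ G.dist v x = k}

/-- `N(S)`: the set of vertices adjacent to at least one vertex of `S`. -/
def neighborsOf {V : Type} (G : SimpleGraph V) (S : Set V) : Set V :=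
  {x | ∃ s ∈ S, G.Adj s x}

/-- A walk is an induced path: it is a path, and its vertex set induces
no edges other than the path edges. -/
def IsInducedPathW {V : Type} {G : SimpleGraph V} {u w : V} (p : G.Walk u w) : Prop :=
  p.IsPath ∧ ∀ a ∈ p.support, ∀ b ∈ p.support, G.Adj a b → s(a, b) ∈ p.edges

/-- A Parity Changing Path (PCP) of order `ℓ` in `G`: regular blocks `block 0, …, block (ℓ-1)`
(vertex sets of induced subgraphs), a last block `lastBlock`, induced paths `path i` of
length at least `2` from `y i ∈ block i` to `x i.succ`, with the prescribed shared vertices,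
disjointness and edge conditions, an induced odd and an induced even `x i`–`y i` path inside
each regular block, `lastBlock` connected and each regular block `4`-colorable. -/
structure PCP {V : Type} (G : SimpleGraph V) (ℓ : ℕ) where
  block : Fin ℓ → Set V
  lastBlock : Set V
  x : Fin (ℓ + 1) → V
  y : Fin ℓ → V
  path : (i : Fin ℓ) → G.Walk (y i) (x i.succ)
  x_mem : ∀ i : Fin ℓ, x i.castSucc ∈ block i
  y_mem : ∀ i : Fin ℓ, y i ∈ block i
  xlast_mem : x (Fin.last ℓ) ∈ lastBlock
  path_induced : ∀ i, IsInducedPathW (path i)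
  path_length : ∀ i, 2 ≤ (path i).length
  blocks_disjoint : ∀ i j, i ≠ j → Disjoint (block i) (block j)
  block_last_disjoint : ∀ i, Disjoint (block i) lastBlock
  block_path_inter : ∀ i j : Fin ℓ, ∀ w ∈ block i, w ∈ (path j).support →
      (j = i ∧ w = y i) ∨ ((j : ℕ) + 1 = (i : ℕ) ∧ w = x i.castSucc)
  last_path_inter : ∀ j : Fin ℓ, ∀ w ∈ lastBlock, w ∈ (path j).support →
      (j : ℕ) + 1 = ℓ ∧ w = x (Fin.last ℓ)
  paths_disjoint : ∀ i j : Fin ℓ, i ≠ j → ∀ w,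
      w ∈ (path i).support → w ∈ (path j).support → False
  edges_within : ∀ a b : V,
      a ∈ (⋃ i, block i) ∪ lastBlock ∪ (⋃ i, {w | w ∈ (path i).support}) →
      b ∈ (⋃ i, block i) ∪ lastBlock ∪ (⋃ i, {w | w ∈ (path i).support}) →
      G.Adj a b →
      (∃ i, a ∈ block i ∧ b ∈ block i) ∨ (a ∈ lastBlock ∧ b ∈ lastBlock) ∨
        (∃ i, a ∈ (path i).support ∧ b ∈ (path i).support)
  odd_path : ∀ i : Fin ℓ, ∃ p : G.Walk (x i.castSucc) (y i),
      IsInducedPathW p ∧ (∀ w ∈ p.support, w ∈ block i) ∧ Odd p.length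
  even_path : ∀ i : Fin ℓ, ∃ p : G.Walk (x i.castSucc) (y i),
      IsInducedPathW p ∧ (∀ w ∈ p.support, w ∈ block i) ∧ Even p.length
  last_connected : (G.induce lastBlock).Connected
  block_chrom : ∀ i, (G.induce (block i)).chromaticNumber ≤ 4

/-- The origin of a PCP. -/
def PCP.origin {V : Type} {G : SimpleGraph V} {ℓ : ℕ} (P : PCP G ℓ) : V := P.x 0

/-- The vertex set of a PCP. -/
def PCP.support {V : Type} {G : SimpleGraph V} {ℓ : ℕ} (P : PCP G ℓ) : Set V :=
  (⋃ i, P.block i) ∪ P.lastBlock ∪ (⋃ i, {w | w ∈ (P.path i).support})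

/-- The leftovers of a PCP: the chromatic number of its last block. -/
noncomputable def PCP.leftovers {V : Type} {G : SimpleGraph V} {ℓ : ℕ} (P : PCP G ℓ) : ℕ :=
  chiSet G P.lastBlock

/-- A strong PCP: every regular block contains an induced 5-cycle. -/
def PCP.IsStrong {V : Type} {G : SimpleGraph V} {ℓ : ℕ} (P : PCP G ℓ) : Prop :=
  ∀ i : Fin ℓ, ∃ f : cycleGraph 5 ↪g G, ∀ t, f t ∈ P.block i

/-- A PCP lies in the level `N_k` of the `v`-levelling and is rooted there: some vertex
`u' ∈ N_{k-1}` is adjacent to the origin and to no other vertex of the PCP. -/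
def PCP.IsRootedInLevel {V : Type} {G : SimpleGraph V} {ℓ : ℕ} (P : PCP G ℓ)
    (v : V) (k : ℕ) : Prop :=
  P.support ⊆ level G v k ∧
    ∃ u' ∈ level G v (k - 1), G.Adj u' P.origin ∧
      ∀ w ∈ P.support, w ≠ P.origin → ¬ G.Adj u' w

/-! ### Colourings and components of induced subgraphs -/

lemma colorable_induce_iff {V : Type} (G : SimpleGraph V) (A : Set V) (n : ℕ) :
    (G.induce A).Colorable n ↔
      ∃ f : V → ℕ, (∀ a ∈ A, f a < n) ∧ ∀ a ∈ A, ∀ b ∈ A, G.Adj a b → f a ≠ f b := by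
  classical
  constructor
  · rintro ⟨c⟩
    refine ⟨fun a => if h : a ∈ A then (c ⟨a, h⟩ : ℕ) else 0, ?_, ?_⟩
    · intro a ha
      simp [ha]
    · intro a ha b hb hab
      have h : (G.induce A).Adj ⟨a, ha⟩ ⟨b, hb⟩ := hab
      have := c.valid h
      simp only [ha, hb, dif_pos]
      intro h'
      exact this (Fin.ext h')
  · rintro ⟨f, hf, hv⟩
    refine ⟨Coloring.mk (fun a => (⟨f a, hf a a.2⟩ : Fin n)) ?_⟩
    intro a b hab h
    exact hv a a.2 b b.2 hab (by simpa using h)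

lemma colorable_induce_mono {V : Type} (G : SimpleGraph V) {A A' : Set V} (h : A ⊆ A') {n : ℕ}
    (hc : (G.induce A').Colorable n) : (G.induce A).Colorable n := by
  rw [colorable_induce_iff] at *
  obtain ⟨f, hf, hv⟩ := hc
  exact ⟨f, fun a ha => hf a (h ha), fun a ha b hb => hv a (h ha) b (h hb)⟩

lemma colorable_induce_add {V : Type} (G : SimpleGraph V) (C S : Set V) {n m : ℕ}
    (h1 : (G.induce (C \ S)).Colorable n) (h2 : (G.induce (C ∩ S)).Colorable m) :
    (G.induce C).Colorable (n + m) := by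
  classical
  rw [colorable_induce_iff] at *
  obtain ⟨f, hf, hfv⟩ := h1
  obtain ⟨g, hg, hgv⟩ := h2
  refine ⟨fun a => if a ∈ S then n + g a else f a, ?_, ?_⟩
  · intro a ha
    by_cases h : a ∈ S
    · have := hg a ⟨ha, h⟩
      simp only [h, if_true]; omega
    · have := hf a ⟨ha, h⟩
      simp only [h, if_false]; omega
  · intro a ha b hb hab
    by_cases h : a ∈ S <;> by_cases h' : b ∈ S <;> simp only [h, h', if_true, if_false]
    · have := hgv a ⟨ha, h⟩ b ⟨hb, h'⟩ hab
      omega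
    · have := hf b ⟨hb, h'⟩
      omega
    · have := hf a ⟨ha, h⟩
      omega
    · exact hfv a ⟨ha, h⟩ b ⟨hb, h'⟩ hab

lemma exists_boundary_edge {V : Type} (G : SimpleGraph V) {C A : Set V}
    (hC : (G.induce C).Connected) {a b : V} (ha : a ∈ A) (haC : a ∈ C) (hb : b ∈ C) (hbA : b ∉ A) :
    ∃ p ∈ A, ∃ q ∈ C, q ∉ A ∧ G.Adj p q := by
  obtain ⟨w⟩ := hC.preconnected ⟨a, haC⟩ ⟨b, hb⟩
  obtain ⟨d, -, h1, h2⟩ := w.exists_boundary_dart {y | (y : V) ∈ A} ha hbA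
  exact ⟨d.fst, h1, d.snd, d.snd.2, h2, d.adj⟩

lemma exists_component {V : Type} (G : SimpleGraph V) {A : Set V} {n : ℕ}
    (h : ¬ (G.induce A).Colorable n) :
    ∃ C ⊆ A, (G.induce C).Connected ∧ ¬ (G.induce C).Colorable n ∧
      ∀ a ∈ C, ∀ b ∈ A, G.Adj a b → b ∈ C := by
  rw [colorable_iff_forall_connectedComponent] at h
  push Not at h
  obtain ⟨K, hK⟩ := h
  let e : K.toSimpleGraph ≃g G.induce (Subtype.val '' K.supp) :=
    { toFun := fun a => ⟨a.1.1, a.1, a.2, rfl⟩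
      invFun := fun b => ⟨⟨b.1, by obtain ⟨y, -, hy⟩ := b.2; rw [← hy]; exact y.2⟩, by
        obtain ⟨y, hy', hy⟩ := b.2
        have : y = ⟨b.1, by rw [← hy]; exact y.2⟩ := Subtype.ext hy
        rw [← this]; exact hy'⟩
      left_inv := fun a => rfl
      right_inv := fun b => rfl
      map_rel_iff' := Iff.rfl }
  refine ⟨Subtype.val '' K.supp, ?_, ?_, ?_, ?_⟩
  · rintro _ ⟨y, -, rfl⟩
    exact y.2
  · exact e.connected_iff.1 K.connected_toSimpleGraph
  · intro hc
    exact hK (hc.of_hom e.toHom)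
  · rintro _ ⟨y, hy, rfl⟩ b hb hab
    refine ⟨⟨b, hb⟩, ?_, rfl⟩
    have hadj : (G.induce A).Adj y ⟨b, hb⟩ := hab
    exact (ConnectedComponent.mem_supp_congr_adj K hadj).1 hy

/-- Deleting an `m`-colourable part `S` from a connected set `C` leaves a component which is still
hard to colour, and to which some deleted vertex is attached. -/
lemma exists_separated_component {V : Type} (G : SimpleGraph V) {C S : Set V} {n m : ℕ}
    (hC : (G.induce C).Connected) (hn : ¬ (G.induce C).Colorable (n + m))
    (hm : (G.induce (C ∩ S)).Colorable m) {s : V} (hsC : s ∈ C) (hsS : s ∈ S) :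
    ∃ C' ⊆ C, (∀ a ∈ C', a ∉ S) ∧ (G.induce C').Connected ∧ ¬ (G.induce C').Colorable n ∧
      ∃ d ∈ C, d ∈ S ∧ ∃ c ∈ C', G.Adj d c := by
  have h1 : ¬ (G.induce (C \ S)).Colorable n := fun h => hn (colorable_induce_add G C S h hm)
  obtain ⟨C', hsub, hconn, hcol, hmax⟩ := exists_component G h1
  refine ⟨C', fun a ha => (hsub ha).1, fun a ha => (hsub ha).2, hconn, hcol, ?_⟩
  obtain ⟨a, ha⟩ := hconn.nonempty
  obtain ⟨p, hp, q, hq, hqn, hpq⟩ := exists_boundary_edge G hC ha (hsub ha).1 hsC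
    (fun h => (hsub h).2 hsS)
  refine ⟨q, hq, ?_, p, hp, hpq.symm⟩
  by_contra hqS
  exact hqn (hmax p hp q ⟨hq, hqS⟩ hpq)

lemma no_triangle {V : Type} {G : SimpleGraph V} (h3 : G.CliqueFree 3) {a b c : V}
    (hab : G.Adj a b) (hbc : G.Adj b c) (hac : G.Adj a c) : False := by
  classical
  exact h3 {a, b, c} (is3Clique_triple_iff.2 ⟨hab, hac, hbc⟩)

lemma colorable_inter_neighbors {V : Type} {G : SimpleGraph V} (h3 : G.CliqueFree 3)
    (C : Set V) (w : V) : (G.induce (C ∩ {a | G.Adj w a})).Colorable 1 := by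
  rw [colorable_induce_iff]
  refine ⟨fun _ => 0, by simp, ?_⟩
  intro a ha b hb hab
  exact (no_triangle h3 ha.2 hab hb.2).elim

lemma colorable_inter_neighbors_four {V : Type} {G : SimpleGraph V} (h3 : G.CliqueFree 3)
    (C : Set V) (u x z t : V) :
    (G.induce (C ∩ {a | G.Adj u a ∨ G.Adj x a ∨ G.Adj z a ∨ G.Adj t a})).Colorable 4 := by
  classical
  rw [colorable_induce_iff]
  refine ⟨fun a => if G.Adj u a then 0 else if G.Adj x a then 1 else if G.Adj z a then 2 else 3,
    ?_, ?_⟩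
  · intro a _
    dsimp only
    split_ifs <;> omega
  · rintro a ⟨-, ha⟩ b ⟨-, hb⟩ hab
    have key : ∀ w, G.Adj w a → G.Adj w b → False := fun w h h' => no_triangle h3 h hab h'
    have ku := key u
    have kx := key x
    have kz := key z
    have kt := key t
    simp only [Set.mem_ofPred_eq] at ha hb
    dsimp only
    split_ifs <;> first | omega | tauto

lemma no_five_cycle {V : Type} {G : SimpleGraph V} (h3 : G.CliqueFree 3) (h5 : NoInducedCycle G 5)
    {a b c d e : V} (hab : G.Adj a b) (hbc : G.Adj b c) (hcd : G.Adj c d) (hde : G.Adj d e)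
    (hea : G.Adj e a) : False := by
  have nac : ¬ G.Adj a c := fun h => no_triangle h3 hab hbc h
  have nbd : ¬ G.Adj b d := fun h => no_triangle h3 hbc hcd h
  have nce : ¬ G.Adj c e := fun h => no_triangle h3 hcd hde h
  have nda : ¬ G.Adj d a := fun h => no_triangle h3 hde hea h
  have neb : ¬ G.Adj e b := fun h => no_triangle h3 hea hab h
  have hne : a ≠ c := by rintro rfl; exact nda hcd.symm
  have hne2 : a ≠ d := by rintro rfl; exact nac hcd.symm
  have hne3 : b ≠ d := by rintro rfl; exact nda hab.symm
  have hne4 : b ≠ e := by rintro rfl; exact nbd hde.symm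
  have hne5 : c ≠ e := by rintro rfl; exact nac hea.symm
  have h6 := hab.ne
  have h7 := hbc.ne
  have h8 := hcd.ne
  have h9 := hde.ne
  have h10 := hea.ne
  refine h5.false ⟨⟨![a, b, c, d, e], ?_⟩, ?_⟩
  · intro i j hij
    fin_cases i <;> fin_cases j <;> simp_all
  · intro i j
    have hadj : (cycleGraph 5).Adj i j ↔ i - j = 1 ∨ j - i = 1 := cycleGraph_adj
    rw [hadj]
    change G.Adj (![a, b, c, d, e] i) (![a, b, c, d, e] j) ↔ _
    have nac' : ¬ G.Adj c a := fun h => nac h.symm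
    have nbd' : ¬ G.Adj d b := fun h => nbd h.symm
    have nce' : ¬ G.Adj e c := fun h => nce h.symm
    have nda' : ¬ G.Adj a d := fun h => nda h.symm
    have neb' : ¬ G.Adj b e := fun h => neb h.symm
    fin_cases i <;> fin_cases j <;>
      simp [nac, nbd, nce, nda, neb, nac', nbd', nce', nda', neb', hab, hbc, hcd, hde, hea,
        hab.symm, hbc.symm, hcd.symm, hde.symm, hea.symm] <;> decide

/-! ### Induced paths and geodesics -/

lemma mem_support_concat {V : Type} {G : SimpleGraph V} {a b c : V} (r : G.Walk a b)
    (hbc : G.Adj b c) (s : V) : s ∈ (r.concat hbc).support ↔ s ∈ r.support ∨ s = c := by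
  simp [Walk.support_concat]

lemma IsInducedPathW.snoc {V : Type} {G : SimpleGraph V} {v a b : V} {p : G.Walk v a}
    (hp : IsInducedPathW p) (h : G.Adj a b) (hb : b ∉ p.support)
    (hn : ∀ c ∈ p.support, G.Adj c b → c = a) : IsInducedPathW (p.concat h) := by
  refine ⟨hp.1.concat hb h, ?_⟩
  intro c hc d hd hcd
  rw [mem_support_concat] at hc hd
  simp only [Walk.edges_concat, List.concat_eq_append, List.mem_append, List.mem_singleton]
  rcases hc with hc | rfl <;> rcases hd with hd | rfl
  · exact Or.inl (hp.2 c hc d hd hcd)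
  · right; rw [hn c hc hcd]
  · right; rw [hn d hd hcd.symm, Sym2.eq_swap]
  · exact (G.irrefl hcd).elim

lemma dist_adj_le {V : Type} {G : SimpleGraph V} (hconn : G.Connected) (v : V) {a b : V}
    (h : G.Adj a b) : G.dist v b ≤ G.dist v a + 1 := by
  have := hconn.dist_triangle (u := v) (v := a) (w := b)
  rwa [dist_eq_one_iff_adj.2 h] at this

lemma exists_parent {V : Type} {G : SimpleGraph V} (hconn : G.Connected) (v : V) {a : V} {k : ℕ}
    (h : G.dist v a = k + 1) : ∃ b, G.Adj b a ∧ G.dist v b = k := by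
  obtain ⟨p, hp⟩ := hconn.exists_walk_length_eq_dist v a
  have hnil : ¬ p.Nil := by
    intro hn
    have := Walk.length_eq_zero_iff.2 hn
    omega
  have hadj := p.adj_penultimate hnil
  refine ⟨p.penultimate, hadj, ?_⟩
  have h1 : G.dist v p.penultimate ≤ p.dropLast.length := dist_le _
  have h2 := dist_adj_le hconn v hadj
  have h3 : p.dropLast.length + 1 = p.length := by
    have := congrArg Walk.length (Walk.concat_dropLast hadj)
    rwa [Walk.length_concat] at this
  omega

lemma exists_geodesic {V : Type} {G : SimpleGraph V} (hconn : G.Connected) (v : V) (k : ℕ) :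
    ∀ a, G.dist v a = k → ∃ p : G.Walk v a, IsInducedPathW p ∧ p.length = k ∧
      (∀ s ∈ p.support, s = a ∨ G.dist v s < k) ∧
      (∀ s ∈ p.support, ∀ t ∈ p.support, G.dist v s = G.dist v t → s = t) := by
  induction k with
  | zero =>
    intro a ha
    obtain rfl := hconn.dist_eq_zero_iff.1 ha
    refine ⟨Walk.nil, ⟨Walk.IsPath.nil, ?_⟩, rfl, ?_, ?_⟩ <;> simp
  | succ k ih =>
    intro a ha
    obtain ⟨b, hba, hb⟩ := exists_parent hconn v ha
    obtain ⟨p, hp, hl, hlow, hinj⟩ := ih b hb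
    have hle : ∀ s ∈ p.support, G.dist v s ≤ k := by
      intro s hs
      rcases hlow s hs with rfl | h <;> omega
    have hmem : ∀ s, s ∈ (p.concat hba).support ↔ s ∈ p.support ∨ s = a :=
      mem_support_concat p hba
    refine ⟨p.concat hba, hp.snoc hba ?_ ?_, by rw [Walk.length_concat, hl], ?_, ?_⟩
    · intro h
      have := hle a h
      omega
    · intro c hc hca
      rcases hlow c hc with h | h
      · exact h
      · have := dist_adj_le hconn v hca
        omega
    · intro s hs
      rcases (hmem s).1 hs with h | h
      · right; have := hle s h; omega
      · exact Or.inl h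
    · intro s hs t ht hst
      rcases (hmem s).1 hs with h | rfl <;> rcases (hmem t).1 ht with h' | rfl
      · exact hinj s h t h' hst
      · have := hle s h; omega
      · have := hle t h'; omega
      · rfl

/-! ### Regular blocks -/

/-- `B` can serve as the (only) regular block of a PCP of order `1`, entered at `v` and left
at `y`. -/
structure IsRegularBlock {V : Type} (G : SimpleGraph V) (v y : V) (B : Set V) : Prop where
  mem_left : v ∈ B
  mem_right : y ∈ B
  odd : ∃ p : G.Walk v y, IsInducedPathW p ∧ (∀ w ∈ p.support, w ∈ B) ∧ Odd p.length
  even : ∃ p : G.Walk v y, IsInducedPathW p ∧ (∀ w ∈ p.support, w ∈ B) ∧ Even p.length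
  colorable : (G.induce B).Colorable 4

/-- Two induced paths whose lengths differ in parity provide both parities. -/
lemma IsRegularBlock.of_paths {V : Type} {G : SimpleGraph V} {v y : V} {B : Set V}
    (hv : v ∈ B) (hy : y ∈ B) (hc : (G.induce B).Colorable 4) (p q : G.Walk v y)
    (hp : IsInducedPathW p) (hpB : ∀ w ∈ p.support, w ∈ B)
    (hq : IsInducedPathW q) (hqB : ∀ w ∈ q.support, w ∈ B)
    (hodd : Odd (p.length + q.length)) : IsRegularBlock G v y B := by
  rcases Nat.even_or_odd p.length with h | h
  · refine ⟨hv, hy, ⟨q, hq, hqB, ?_⟩, ⟨p, hp, hpB, h⟩, hc⟩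
    rcases Nat.even_or_odd q.length with h' | h'
    · exact (Nat.not_even_iff_odd.2 hodd (h.add h')).elim
    · exact h'
  · refine ⟨hv, hy, ⟨p, hp, hpB, h⟩, ⟨q, hq, hqB, ?_⟩, hc⟩
    rcases Nat.even_or_odd q.length with h' | h'
    · exact h'
    · exact (Nat.not_even_iff_odd.2 hodd (h.add_odd h')).elim

/-- `uxzt` is a path of `G` (with `ut` possibly an edge) whose middle edge `xz` lies in level
`j + 1` of the `v`-levelling and whose ends lie in level `j`. -/
structure IsBridge {V : Type} (G : SimpleGraph V) (v : V) (j : ℕ) (u x z t : V) : Prop where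
  du : G.dist v u = j
  dx : G.dist v x = j + 1
  dz : G.dist v z = j + 1
  dt : G.dist v t = j
  ux : G.Adj u x
  xz : G.Adj x z
  zt : G.Adj z t

lemma IsBridge.symm {V : Type} {G : SimpleGraph V} {v : V} {j : ℕ} {u x z t : V}
    (h : IsBridge G v j u x z t) : IsBridge G v j t z x u :=
  ⟨h.dt, h.dz, h.dx, h.du, h.zt.symm, h.xz.symm, h.ux.symm⟩

/-- A bridge together with geodesics to its two ends is a regular block, whether it is left
at `x` or at `u`. -/
lemma exists_block {V : Type} {G : SimpleGraph V} (hconn : G.Connected) (h3 : G.CliqueFree 3)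
    (h5 : NoInducedCycle G 5) {v : V} {j : ℕ} {u x z t : V} (h : IsBridge G v j u x z t) :
    ∃ B : Set V, IsRegularBlock G v x B ∧ IsRegularBlock G v u B ∧
      (u ∈ B ∧ x ∈ B ∧ z ∈ B ∧ t ∈ B) ∧
      ∀ b ∈ B, (b = u ∨ b = x ∨ b = z ∨ b = t) ∨ G.dist v b < j := by
  classical
  obtain ⟨p, hp, pl, plow, pinj⟩ := exists_geodesic hconn v j u h.du
  obtain ⟨q, hq, ql, qlow, qinj⟩ := exists_geodesic hconn v j t h.dt
  obtain ⟨du, dx, dz, dt, ux, xz, zt⟩ := h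
  have nuz : ¬ G.Adj u z := fun h => no_triangle h3 ux xz h
  have nxt : ¬ G.Adj x t := fun h => no_triangle h3 xz zt h
  have hut : u ≠ t := by rintro rfl; exact nuz zt.symm
  -- a vertex below level `j` has no neighbour in level `j + 1`
  have hfar : ∀ a b, G.dist v a < j → G.dist v b = j + 1 → ¬ G.Adj a b := by
    intro a b ha hb hab
    have := dist_adj_le hconn v hab
    omega
  let B : Set V := {b | b ∈ p.support ∨ b = x ∨ b ∈ q.support ∨ b = z}
  have hvB : v ∈ B := Or.inl p.start_mem_support
  have huB : u ∈ B := Or.inl p.end_mem_support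
  have htB : t ∈ B := Or.inr (Or.inr (Or.inl q.end_mem_support))
  have hxB : x ∈ B := Or.inr (Or.inl rfl)
  have hzB : z ∈ B := Or.inr (Or.inr (Or.inr rfl))
  have hpB : ∀ w ∈ p.support, w ∈ B := fun w hw => Or.inl hw
  have hqB : ∀ w ∈ q.support, w ∈ B := fun w hw => Or.inr (Or.inr (Or.inl hw))
  have ple : ∀ s ∈ p.support, G.dist v s ≤ j := by
    intro s hs
    rcases plow s hs with rfl | h <;> omega
  have qle : ∀ s ∈ q.support, G.dist v s ≤ j := by
    intro s hs
    rcases qlow s hs with rfl | h <;> omega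
  have hcol : (G.induce B).Colorable 4 := by
    rw [colorable_induce_iff]
    have hinj1 : ∀ a b, (a ∈ p.support ∨ a = x) → (b ∈ p.support ∨ b = x) →
        G.dist v a = G.dist v b → a = b := by
      rintro a b (ha | rfl) (hb | rfl) hab
      · exact pinj a ha b hb hab
      · have := ple a ha; omega
      · have := ple b hb; omega
      · rfl
    have hinj2 : ∀ a b, (a ∈ q.support ∨ a = z) → (b ∈ q.support ∨ b = z) →
        G.dist v a = G.dist v b → a = b := by
      rintro a b (ha | rfl) (hb | rfl) hab
      · exact qinj a ha b hb hab
      · have := qle a ha; omega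
      · have := qle b hb; omega
      · rfl
    -- the parity of the level, combined with which of the two paths the vertex lies on
    refine ⟨fun a => if a ∈ p.support ∨ a = x then G.dist v a % 2 else 2 + G.dist v a % 2, ?_, ?_⟩
    · intro a _
      dsimp only
      split_ifs <;> omega
    · intro a ha b hb hab heq
      have h1 := dist_adj_le hconn v hab
      have h2 := dist_adj_le hconn v hab.symm
      dsimp only at heq
      apply hab.ne
      by_cases ha' : a ∈ p.support ∨ a = x <;> by_cases hb' : b ∈ p.support ∨ b = x <;>
        simp only [ha', hb', if_true, if_false] at heq
      · exact hinj1 a b ha' hb' (by omega)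
      · omega
      · omega
      · have ha2 : a ∈ q.support ∨ a = z := by
          rcases ha with h | h | h | h <;> tauto
        have hb2 : b ∈ q.support ∨ b = z := by
          rcases hb with h | h | h | h <;> tauto
        exact hinj2 a b ha2 hb2 (by omega)
  have hsubc : ∀ {a b c : V} (r : G.Walk a b) (hbc : G.Adj b c), (∀ w ∈ r.support, w ∈ B) →
      c ∈ B → ∀ w ∈ (r.concat hbc).support, w ∈ B := by
    intro a b c r hbc hr hc w hw
    rcases (mem_support_concat r hbc w).1 hw with h | rfl
    · exact hr w h
    · exact hc
  have hpx : IsInducedPathW (p.concat ux) := by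
    refine hp.snoc ux (fun hx => by have := ple x hx; omega) ?_
    intro c hc hcx
    rcases plow c hc with h | h
    · exact h
    · exact (hfar c x h dx hcx).elim
  have hqz : IsInducedPathW (q.concat zt.symm) := by
    refine hq.snoc zt.symm (fun hx => by have := qle z hx; omega) ?_
    intro c hc hcx
    rcases qlow c hc with h | h
    · exact h
    · exact (hfar c z h dz hcx).elim
  have hqzx : IsInducedPathW ((q.concat zt.symm).concat xz.symm) := by
    refine hqz.snoc xz.symm ?_ ?_
    · intro hx
      rcases (mem_support_concat _ _ _).1 hx with hx | hx
      · have := qle x hx; omega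
      · exact xz.ne hx
    · intro c hc hcx
      rcases (mem_support_concat _ _ _).1 hc with hc | hc
      · rcases qlow c hc with rfl | h
        · exact (nxt hcx.symm).elim
        · exact (hfar c x h dx hcx).elim
      · exact hc
  have huq : u ∉ q.support := by
    intro hu
    rcases qlow u hu with h | h
    · exact hut h
    · omega
  refine ⟨B, ?_, ?_, ⟨huB, hxB, hzB, htB⟩, ?_⟩
  · refine IsRegularBlock.of_paths hvB hxB hcol _ _ hpx (hsubc _ _ hpB hxB)
      hqzx (hsubc _ _ (hsubc _ _ hqB hzB) hxB) ?_
    simp only [Walk.length_concat, pl, ql]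
    exact ⟨j + 1, by ring⟩
  · -- a neighbour of `u` on `q` other than `t` has to be the vertex of `q` preceding `t`
    have hpar : ∀ c ∈ q.support, G.Adj c u → c = t ∨ G.Adj c t := by
      intro c hc hcu
      by_contra! hct
      have hcj : G.dist v c < j := (qlow c hc).resolve_left hct.1
      have hcj' := dist_adj_le hconn v hcu
      have hnil : ¬ q.Nil := by
        intro hn
        have := Walk.length_eq_zero_iff.2 hn
        omega
      have hpen := q.adj_penultimate hnil
      have hpl := dist_adj_le hconn v hpen
      have hmem : q.penultimate ∈ q.support := q.getVert_mem_support _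
      have hpj : G.dist v q.penultimate < j := (qlow _ hmem).resolve_left hpen.ne
      have := qinj c hc _ hmem (by omega)
      exact hct.2 (this ▸ hpen)
    by_cases hadj : G.Adj t u
    · have hind : IsInducedPathW (q.concat hadj) := by
        refine hq.snoc hadj huq ?_
        intro c hc hcu
        rcases hpar c hc hcu with h | h
        · exact h
        · exact (no_triangle h3 h hadj hcu).elim
      refine IsRegularBlock.of_paths hvB huB hcol _ _ hp hpB hind (hsubc _ _ hqB huB) ?_
      simp only [Walk.length_concat, pl, ql]
      exact ⟨j, by ring⟩
    · have hind : IsInducedPathW (((q.concat zt.symm).concat xz.symm).concat ux.symm) := by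
        refine hqzx.snoc ux.symm ?_ ?_
        · intro hu
          rcases (mem_support_concat _ _ _).1 hu with hu | hu
          · rcases (mem_support_concat _ _ _).1 hu with hu | hu
            · exact huq hu
            · rw [hu] at du; omega
          · exact ux.ne hu
        · intro c hc hcu
          rcases (mem_support_concat _ _ _).1 hc with hc | hc
          · rcases (mem_support_concat _ _ _).1 hc with hc | hc
            · rcases hpar c hc hcu with h | h
              · rw [h] at hcu; exact (hadj hcu).elim
              · exact (no_five_cycle h3 h5 ux xz zt h.symm hcu).elim
            · rw [hc] at hcu; exact (nuz hcu.symm).elim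
          · exact hc
      refine IsRegularBlock.of_paths hvB huB hcol _ _ hp hpB hind
        (hsubc _ _ (hsubc _ _ (hsubc _ _ hqB hzB) hxB) huB) ?_
      simp only [Walk.length_concat, pl, ql]
      exact ⟨j + 1, by ring⟩
  · intro b hb
    rcases hb with h | h | h | h
    · rcases plow b h with h | h <;> tauto
    · tauto
    · rcases qlow b h with h | h <;> tauto
    · tauto

/-! ### Attaching the last block -/

/-- A regular block is completed to a PCP of order `1` by a connected set `C`, anticomplete to the
block, that can be reached from the exit `y` through a single vertex `w`. The last block is a
component of `C` without the neighbours of `w`, plus one neighbour `d` of `w`; this makes `d` the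
only neighbour of `w` there. -/
lemma pcp_of_block {V : Type} [Fintype V] {G : SimpleGraph V} (h3 : G.CliqueFree 3) {v y w : V}
    {B C : Set V} {n : ℕ} (hB : IsRegularBlock G v y B) (hC : (G.induce C).Connected)
    (hBC : ∀ c ∈ C, c ∉ B ∧ ∀ b ∈ B, ¬ G.Adj b c) (hwB : w ∉ B) (hwC : w ∉ C)
    (hyw : G.Adj y w) (hw : ∀ b ∈ B, G.Adj b w → b = y) {c₀ : V} (hc₀ : c₀ ∈ C)
    (hwc : G.Adj w c₀) (hn : ¬ (G.induce C).Colorable (n + 1)) :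
    ∃ P : PCP G 1, P.origin = v ∧ n + 1 ≤ P.leftovers := by
  obtain ⟨C', hsub, hS, hconn, hcol, d, hdC, hdS, c, hc, hdc⟩ :=
    exists_separated_component G (S := {a | G.Adj w a}) hC hn
      (colorable_inter_neighbors h3 C w) hc₀ hwc
  have hwd : G.Adj w d := hdS
  let H : Set V := insert d C'
  have hHC : ∀ a ∈ H, a ∈ C := by
    rintro a (rfl | ha)
    · exact hdC
    · exact hsub ha
  have hHw : ∀ a ∈ H, G.Adj w a → a = d := by
    rintro a (rfl | ha) h
    · rfl
    · exact (hS a ha h).elim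
  have hHconn : (G.induce H).Connected := by
    have h1 := induce_union_connected (induce_pair_connected_of_adj hdc).preconnected hconn.preconnected
      ⟨c, Or.inr rfl, hc⟩
    have h2 : ({d, c} : Set V) ∪ C' = H := by
      ext a
      simp only [H, Set.mem_union, Set.mem_insert_iff, Set.mem_singleton_iff]
      constructor
      · rintro ((h | rfl) | h) <;> tauto
      · tauto
    rwa [h2] at h1
  have hleft : n + 1 ≤ chiSet G H := by
    unfold chiSet
    by_contra! hlt
    have h1 := colorable_chromaticNumber_of_fintype (G.induce H)
    exact hcol (colorable_induce_mono G (Set.subset_insert _ _) (h1.mono (by omega)))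
  have hyC : y ∉ C := fun h => (hBC y h).1 hB.mem_right
  have hyd : y ≠ d := by rintro rfl; exact hyC hdC
  have hyd' : ¬ G.Adj y d := (hBC d hdC).2 y hB.mem_right
  have hdB : d ∉ B := (hBC d hdC).1
  let p : G.Walk y d := Walk.cons hyw (Walk.cons hwd Walk.nil)
  have hps : ∀ a, a ∈ p.support ↔ a = y ∨ a = w ∨ a = d := by
    intro a; simp [p]
  have hpi : IsInducedPathW p := by
    constructor
    · simp [p, Walk.cons_isPath_iff, hyw.ne, hwd.ne, hyd]
    · intro a ha b hb hab
      rcases (hps a).1 ha with rfl | rfl | rfl <;> rcases (hps b).1 hb with rfl | rfl | rfl <;>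
        first
        | exact (G.irrefl hab).elim
        | exact (hyd' hab).elim
        | exact (hyd' hab.symm).elim
        | simp [p]
  refine ⟨{
    block := fun _ => B
    lastBlock := H
    x := ![v, d]
    y := fun _ => y
    path := fun i => p.copy rfl (by fin_cases i; rfl)
    x_mem := ?_
    y_mem := fun _ => hB.mem_right
    xlast_mem := Or.inl rfl
    path_induced := ?_
    path_length := ?_
    blocks_disjoint := fun i j h => (h (Subsingleton.elim _ _)).elim
    block_last_disjoint := ?_
    block_path_inter := ?_
    last_path_inter := ?_
    paths_disjoint := fun i j h => (h (Subsingleton.elim _ _)).elim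
    edges_within := ?_
    odd_path := ?_
    even_path := ?_
    last_connected := hHconn
    block_chrom := fun _ => hB.colorable.chromaticNumber_le }, rfl, hleft⟩
  · intro i; fin_cases i; exact hB.mem_left
  · intro i; fin_cases i; exact hpi
  · intro i; fin_cases i; exact le_refl 2
  · intro i
    exact Set.disjoint_left.2 fun a ha haH => (hBC a (hHC a haH)).1 ha
  · intro i j a ha haj
    fin_cases i; fin_cases j
    rcases (hps a).1 haj with rfl | rfl | rfl
    · exact Or.inl ⟨rfl, rfl⟩
    · exact (hwB ha).elim
    · exact (hdB ha).elim
  · intro j a ha haj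
    fin_cases j
    rcases (hps a).1 haj with rfl | rfl | rfl
    · exact (hyC (hHC _ ha)).elim
    · exact (hwC (hHC _ ha)).elim
    · exact ⟨rfl, rfl⟩
  · have hmem : ∀ a, a ∈ (⋃ _ : Fin 1, B) ∪ H ∪ (⋃ i : Fin 1, {s | s ∈
        (p.copy rfl (by fin_cases i; rfl) : G.Walk y ((![v, d] : Fin 2 → V) i.succ)).support}) →
        a ∈ B ∨ a ∈ H ∨ a = w := by
      rintro a ((ha | ha) | ha)
      · obtain ⟨i, hi⟩ := Set.mem_iUnion.1 ha
        exact Or.inl hi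
      · exact Or.inr (Or.inl ha)
      · obtain ⟨i, hi⟩ := Set.mem_iUnion.1 ha
        fin_cases i
        rcases (hps a).1 hi with rfl | rfl | rfl
        · exact Or.inl hB.mem_right
        · exact Or.inr (Or.inr rfl)
        · exact Or.inr (Or.inl (Or.inl rfl))
    intro a b ha hb hab
    have hy : y ∈ p.support := (hps y).2 (Or.inl rfl)
    have hw' : w ∈ p.support := (hps w).2 (Or.inr (Or.inl rfl))
    have hd : d ∈ p.support := (hps d).2 (Or.inr (Or.inr rfl))
    rcases hmem a ha with ha' | ha' | rfl <;> rcases hmem b hb with hb' | hb' | rfl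
    · exact Or.inl ⟨0, ha', hb'⟩
    · exact ((hBC b (hHC b hb')).2 a ha' hab).elim
    · obtain rfl := hw a ha' hab
      exact Or.inr (Or.inr ⟨0, hy, hw'⟩)
    · exact ((hBC a (hHC a ha')).2 b hb' hab.symm).elim
    · exact Or.inr (Or.inl ⟨ha', hb'⟩)
    · obtain rfl := hHw a ha' hab.symm
      exact Or.inr (Or.inr ⟨0, hd, hw'⟩)
    · obtain rfl := hw b hb' hab.symm
      exact Or.inr (Or.inr ⟨0, hw', hy⟩)
    · obtain rfl := hHw b hb' hab
      exact Or.inr (Or.inr ⟨0, hw', hd⟩)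
    · exact (G.irrefl hab).elim
  · intro i; fin_cases i; exact hB.odd
  · intro i; fin_cases i; exact hB.even

/-- If a connected set `C` of level `j + 1` avoids the neighbourhood of a bridge `uxzt` and is
attached to it through `q`, then the bridge, or the bridge with `q` in place of `x`, yields a PCP.
The hypothesis `hq` covers, up to exchanging the two ends of the bridge, every way in which
`q` can be attached. -/
lemma pcp_of_attached {V : Type} [Fintype V] {G : SimpleGraph V} (hconn : G.Connected)
    (h3 : G.CliqueFree 3) (h5 : NoInducedCycle G 5) {v : V} {j : ℕ} {u x z t q : V}
    (h : IsBridge G v j u x z t) {C : Set V} {n : ℕ} (hC : (G.induce C).Connected)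
    (hCj : ∀ c ∈ C, G.dist v c = j + 1)
    (hCN : ∀ c ∈ C, ¬ (G.Adj u c ∨ G.Adj x c ∨ G.Adj z c ∨ G.Adj t c))
    (hn : ¬ (G.induce C).Colorable (n + 2)) (hqj : G.dist v q = j + 1) (hqC : q ∉ C)
    {c₀ : V} (hc₀ : c₀ ∈ C) (hqc : G.Adj q c₀)
    (hq : G.Adj u q ∨ (G.Adj x q ∧ ¬ G.Adj u q ∧ ¬ G.Adj t q)) :
    ∃ P : PCP G 1, P.origin = v ∧ n + 1 ≤ P.leftovers := by
  have hfar : ∀ a b, G.dist v a < j → G.dist v b = j + 1 → ¬ G.Adj a b := by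
    intro a b ha hb hab
    have := dist_adj_le hconn v hab
    omega
  have hCN' : ∀ c ∈ C, ¬ G.Adj u c ∧ ¬ G.Adj x c ∧ ¬ G.Adj z c ∧ ¬ G.Adj t c := by
    intro c hc
    have := hCN c hc
    tauto
  have hqx : q ≠ x := by rintro rfl; exact (hCN' c₀ hc₀).2.1 hqc
  have hqz : q ≠ z := by rintro rfl; exact (hCN' c₀ hc₀).2.2.1 hqc
  have hCx : x ∉ C := fun hx => (hCN' x hx).1 h.ux
  have hCz : z ∉ C := fun hz => (hCN' z hz).2.1 h.xz
  obtain ⟨B, hBx, hBu, -, hlow⟩ := exists_block hconn h3 h5 h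
  have hnot : ∀ a, G.dist v a = j + 1 → a ≠ x → a ≠ z → a ∉ B := by
    intro a ha hax haz haB
    rcases hlow a haB with (rfl | h' | h' | rfl) | h'
    · have := h.du; omega
    · exact hax h'
    · exact haz h'
    · have := h.dt; omega
    · omega
  have hBC : ∀ c ∈ C, c ∉ B ∧ ∀ b ∈ B, ¬ G.Adj b c := by
    intro c hc
    refine ⟨hnot c (hCj c hc) (by rintro rfl; exact hCx hc) (by rintro rfl; exact hCz hc), ?_⟩
    intro b hb
    obtain ⟨h1, h2, h3, h4⟩ := hCN' c hc
    rcases hlow b hb with (rfl | rfl | rfl | rfl) | h'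
    · exact h1
    · exact h2
    · exact h3
    · exact h4
    · exact hfar b c h' (hCj c hc)
  have hqB : q ∉ B := hnot q hqj hqx hqz
  have hn1 : ¬ (G.induce C).Colorable (n + 1) := fun hc => hn (hc.mono (by omega))
  rcases hq with huq | ⟨hxq, huq, htq⟩
  · have hxq : ¬ G.Adj x q := fun h' => no_triangle h3 h.ux h' huq
    have htq : ¬ G.Adj t q := by
      intro h'
      exact no_five_cycle h3 h5 h.ux h.xz h.zt h' huq.symm
    by_cases hzq : G.Adj z q
    · have h' : IsBridge G v j u q z t := ⟨h.du, hqj, h.dz, h.dt, huq, hzq.symm, h.zt⟩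
      obtain ⟨B', hB', -, ⟨huB, hqB', hzB, htB⟩, hlow'⟩ := exists_block hconn h3 h5 h'
      obtain ⟨C', hsub, hS, hconn', hcol, d, hdC, hdS, c, hc, hdc⟩ :=
        exists_separated_component G (n := n + 1) (S := {a | G.Adj q a}) hC hn
          (colorable_inter_neighbors h3 C q) hc₀ hqc
      have hCB' : ∀ c ∈ C, c ∉ B' := by
        intro c hc hcB
        rcases hlow' c hcB with (rfl | rfl | rfl | rfl) | h''
        · have := h.du; have := hCj _ hc; omega
        · exact hqC hc
        · exact hCz hc
        · have := h.dt; have := hCj _ hc; omega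
        · have := hCj _ hc; omega
      have hadj' : ∀ c ∈ C, ∀ b ∈ B', G.Adj b c → b = q := by
        intro c hc b hb hbc
        obtain ⟨h1, h2, h3, h4⟩ := hCN' c hc
        rcases hlow' b hb with (rfl | rfl | rfl | rfl) | h''
        · exact (h1 hbc).elim
        · rfl
        · exact (h3 hbc).elim
        · exact (h4 hbc).elim
        · exact (hfar b c h'' (hCj c hc) hbc).elim
      refine pcp_of_block h3 hB' hconn' ?_ (hCB' d hdC) (fun h'' => hS d h'' hdS) hdS
        (hadj' d hdC) hc hdc hcol
      intro a ha
      refine ⟨hCB' a (hsub ha), ?_⟩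
      intro b hb hba
      obtain rfl := hadj' a (hsub ha) b hb hba
      exact hS a ha hba
    · refine pcp_of_block h3 hBu hC hBC hqB hqC huq ?_ hc₀ hqc hn1
      intro b hb hbq
      rcases hlow b hb with (rfl | rfl | rfl | rfl) | h'
      · rfl
      · exact (hxq hbq).elim
      · exact (hzq hbq).elim
      · exact (htq hbq).elim
      · exact (hfar b q h' hqj hbq).elim
  · refine pcp_of_block h3 hBx hC hBC hqB hqC hxq ?_ hc₀ hqc hn1
    intro b hb hbq
    rcases hlow b hb with (rfl | rfl | rfl | rfl) | h'
    · exact (huq hbq).elim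
    · rfl
    · exact (no_triangle h3 h.xz hbq hxq).elim
    · exact (htq hbq).elim
    · exact (hfar b q h' hqj hbq).elim

/-- Levels at distance at least `2` are anticomplete, so the levels of each parity can share one
palette. -/
lemma exists_level_not_colorable {V : Type} {G : SimpleGraph V} (hconn : G.Connected) (v : V)
    {c m : ℕ} (hm : ¬ G.Colorable m) (hc : 2 * c ≤ m) :
    ∃ k, ¬ (G.induce {a | G.dist v a = k}).Colorable c := by
  by_contra! hall
  have hf := fun k => (colorable_induce_iff G _ c).1 (hall k)
  choose f hfc hfv using hf
  have hbound : ∀ a, f (G.dist v a) a < c := fun a => hfc _ a rfl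
  apply hm
  have hcol : G.Colorable (2 * c) := by
    refine ⟨Coloring.mk (fun a => (⟨2 * f (G.dist v a) a + G.dist v a % 2, by
      have := hbound a; omega⟩ : Fin (2 * c))) ?_⟩
    intro a b hab heq
    have heq' : 2 * f (G.dist v a) a + G.dist v a % 2 = 2 * f (G.dist v b) b + G.dist v b % 2 :=
      congrArg Fin.val heq
    have h1 := dist_adj_le hconn v hab
    have h2 := dist_adj_le hconn v hab.symm
    have hd : G.dist v a = G.dist v b := by omega
    have := hfv _ a rfl b hd.symm hab
    rw [← hd] at heq'
    omega
  exact hcol.mono hc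

/-- In a connected graph of `C_{3,5,2k≥6}` with `χ(G) ≥ δ ≥ 18`, from any
vertex `v` one can grow a PCP of order 1 with origin `v` and leftovers at least `δ/2 - 8`. -/
theorem pcp_order_one_exists (V : Type) [Fintype V] (G : SimpleGraph V)
    (hconn : G.Connected) (h3 : G.CliqueFree 3) (h5 : NoInducedCycle G 5)
    (heven : ∀ n : ℕ, 6 ≤ n → Even n → NoInducedCycle G n)
    (v : V) (δ : ℕ) (h18 : 18 ≤ δ) (hδ : δ ≤ chi G) :
    ∃ P : PCP G 1, P.origin = v ∧ (δ : ℝ) / 2 - 8 ≤ (P.leftovers : ℝ) := by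
  set c := (δ - 1) / 2 with hc
  have hG : ¬ G.Colorable (δ - 1) := by
    intro h
    have h1 := ENat.toNat_le_of_le_natCast h.chromaticNumber_le
    unfold chi at hδ
    omega
  obtain ⟨k, hk⟩ := exists_level_not_colorable hconn v (c := c) hG (by omega)
  obtain ⟨D, hDk, hD, hDcol, -⟩ := exists_component G hk
  -- `D` is not `c`-colourable with `c ≥ 8`, so it contains an edge
  obtain ⟨x, hx, z, hz, hxz⟩ : ∃ x ∈ D, ∃ z ∈ D, G.Adj x z := by
    by_contra! hno
    refine hDcol ((colorable_induce_iff G D c).2 ⟨fun _ => 0, fun _ _ => show 0 < c by omega, ?_⟩)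
    intro a ha b hb hab
    exact (hno a ha b hb hab).elim
  have hxk : G.dist v x = k := hDk hx
  have hzk : G.dist v z = k := hDk hz
  obtain ⟨j, rfl⟩ : ∃ j, k = j + 1 := by
    rcases k with _ | j
    · rw [hconn.dist_eq_zero_iff] at hxk hzk
      exact (hxz.ne (hxk.symm.trans hzk)).elim
    · exact ⟨j, rfl⟩
  obtain ⟨u, hux, hu⟩ := exists_parent hconn v hxk
  obtain ⟨t, htz, ht⟩ := exists_parent hconn v hzk
  have hbr : IsBridge G v j u x z t := ⟨hu, hxk, hzk, ht, hux, hxz, htz.symm⟩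
  have hD' : ¬ (G.induce D).Colorable ((c - 6 + 2) + 4) := by
    rwa [show c - 6 + 2 + 4 = c by omega]
  obtain ⟨C, hsub, hCS, hC, hCcol, q, hqD, hqS, c₀, hc₀, hqc⟩ :=
    exists_separated_component G hD hD' (colorable_inter_neighbors_four h3 D u x z t) hx
      (Or.inl hux)
  have hqC : q ∉ C := fun h => hCS q h hqS
  have hCj : ∀ a ∈ C, G.dist v a = j + 1 := fun a ha => hDk (hsub ha)
  have key : ∃ P : PCP G 1, P.origin = v ∧ (c - 6) + 1 ≤ P.leftovers := by
    have hqS' : G.Adj u q ∨ G.Adj x q ∨ G.Adj z q ∨ G.Adj t q := hqS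
    by_cases hside : G.Adj u q ∨ (G.Adj x q ∧ ¬ G.Adj u q ∧ ¬ G.Adj t q)
    · exact pcp_of_attached hconn h3 h5 hbr hC hCj (fun a ha => hCS a ha) hCcol (hDk hqD) hqC
        hc₀ hqc hside
    · refine pcp_of_attached hconn h3 h5 hbr.symm hC hCj ?_ hCcol (hDk hqD) hqC hc₀ hqc ?_
      · intro a ha hadj
        have : ¬ (G.Adj u a ∨ G.Adj x a ∨ G.Adj z a ∨ G.Adj t a) := hCS a ha
        tauto
      · tauto
  obtain ⟨P, hP, hl⟩ := key
  refine ⟨P, hP, ?_⟩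
  have h1 : δ ≤ 2 * P.leftovers + 16 := by omega
  have h2 : (δ : ℝ) ≤ 2 * P.leftovers + 16 := by exact_mod_cast h1
  linarith
end

section
/- Let h(x) = x/2 − 8 and let h^{(j)} denote its j-th iterate. For all positive integers ℓ and δ, if G is a connected graph containing no triangle, no induced cycle of length 5, and no induced cycle of even length at least 6, with χ(G) ≥ δ and h^{(ℓ−1)}(δ) ≥ 18, then from any vertex x_1 of G one can grow a PCP of order ℓ with origin x_1 and leftovers at least h^{(ℓ)}(δ). -/
/-!
A PCP is grown one block at a time. The PCP of order `0` is a connected set on its own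
(`trivialPCP`), and a PCP inside a connected set `H` is extended backwards (`prepend`) by a block
`B`, a vertex `y` of `B` and a path `y c t` with `t ∈ H`, provided that this path carries the only
connection between `B` and `H`. So everything rests on `exists_link`: in a connected set `S` with
root `x`, such a `B ∋ x` and `H` exist with `χ(H) ≥ χ(S) / 2 - 6`, up to rounding.

Some distance level from `x` has at least half of the chromatic number; let `L` be a component of it
of the same chromatic number, `ab` an edge in `L`, and `a'`, `b'` neighbours of `a`, `b` one level
closer to `x`. Delete the neighbourhoods of `a`, `b`, `a'`, `b'`, which are stable sets, and keep a
component `C` of `L` that loses at most four colours. Since `L` is connected, some `q ∈ L` outside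
`C` has a neighbour in `C`, and `q` is then adjacent to one of `a`, `b`, `a'`, `b'`. The block is the
union of the geodesics from `x` to `a'` and to `b'` with `{a, b, q}`. Among its vertices only `q` has
neighbours in `C`. It is `4`-colourable because each level of it spans a bipartite graph.

Without triangles and induced pentagons, `a'` and `b'` have no common neighbour (`no_common`), so
`a'` is adjacent to no vertex of the geodesic to `b'` other than possibly `b'` itself. The two
routes to `q`, one along each geodesic, are then induced and can be chosen with lengths of different
parity (`parity`).

Finally two steps of Gyárfás's path argument (`gyarfas_step`), each costing one colour, lead from `q`
to some `c ∈ C`, then to some `t`, then to a connected set `E`, with `q` anticomplete to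
`E ∪ {t}` and `c` anticomplete to `E`. The last block is `H = E ∪ {t}`.
-/

open SimpleGraph

namespace PCPProof

variable {V : Type} {G : SimpleGraph V}

/-! ### Colourings of vertex sets -/

/-- `G[A]` is `n`-colourable, phrased with a colouring function on the whole vertex type so that
restricting and glueing colourings needs no coercions. -/
def Col (G : SimpleGraph V) (A : Set V) (n : ℕ) : Prop :=
  ∃ f : V → ℕ, (∀ v ∈ A, f v < n) ∧ ∀ u ∈ A, ∀ v ∈ A, G.Adj u v → f u ≠ f v

lemma col_iff {A : Set V} {n : ℕ} : Col G A n ↔ (G.induce A).Colorable n := by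
  classical
  constructor
  · rintro ⟨f, h1, h2⟩
    exact ⟨Coloring.mk (fun v => (⟨f v, h1 v v.2⟩ : Fin n)) (by
      intro u v huv h
      exact h2 u u.2 v v.2 huv (by simpa using h))⟩
  · rintro ⟨c⟩
    refine ⟨fun v => if h : v ∈ A then (c ⟨v, h⟩ : ℕ) else 0, ?_, ?_⟩
    · intro v hv
      simp [hv]
    · intro u hu v hv huv
      have : c ⟨u, hu⟩ ≠ c ⟨v, hv⟩ := c.valid (by simpa using huv)
      simpa [hu, hv, Fin.ext_iff] using this

lemma Col.mono {A B : Set V} {n m : ℕ} (h : Col G B m) (hAB : A ⊆ B) (hmn : m ≤ n) :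
    Col G A n := by
  obtain ⟨f, h1, h2⟩ := h
  exact ⟨f, fun v hv => (h1 v (hAB hv)).trans_le hmn,
    fun u hu v hv => h2 u (hAB hu) v (hAB hv)⟩

/-- Neighbourhoods are stable in a triangle-free graph, so deleting one costs one colour. -/
lemma col_of_diff_nbr (tri : ∀ x y z, G.Adj x y → G.Adj y z → G.Adj x z → False)
    {A : Set V} {n : ℕ} (v : V) (h : Col G (A \ {w | G.Adj v w}) n) : Col G A (n + 1) := by
  classical
  obtain ⟨f, h1, h2⟩ := h
  refine ⟨fun w => if G.Adj v w then n else f w, ?_, ?_⟩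
  · intro w hw
    by_cases hv : G.Adj v w
    · simp [hv]
    · have := h1 w ⟨hw, hv⟩
      simp only [hv, if_false]
      omega
  · intro u hu w hw huw
    by_cases hvu : G.Adj v u <;> by_cases hvw : G.Adj v w <;>
      simp only [hvu, hvw, if_true, if_false]
    · exact (tri v u w hvu huw hvw).elim
    · exact (h1 w ⟨hw, hvw⟩).ne'
    · exact (h1 u ⟨hu, hvu⟩).ne
    · exact h2 u ⟨hu, hvu⟩ w ⟨hw, hvw⟩ huw

/-- Some connected component of `G[A]` needs as many colours as `G[A]`. -/
lemma exists_component {A : Set V} {n : ℕ} (h : ¬ Col G A n) :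
    ∃ C ⊆ A, (G.induce C).Connected ∧ ¬ Col G C n ∧
      ∀ c ∈ C, ∀ w ∈ A, G.Adj c w → w ∈ C := by
  rw [col_iff, colorable_iff_forall_connectedComponent] at h
  push Not at h
  obtain ⟨c, hc⟩ := h
  have mem : ∀ v : c, (v : A).1 ∈ Subtype.val '' c.supp := fun v => ⟨v.1, v.2, rfl⟩
  let φ : c.toSimpleGraph →g G.induce (Subtype.val '' c.supp) :=
    ⟨fun v => ⟨v.1.1, mem v⟩, fun {u v} huv => huv⟩
  refine ⟨Subtype.val '' c.supp, by simp, ?_, ?_, ?_⟩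
  · refine c.connected_toSimpleGraph.map φ ?_
    rintro ⟨_, v, hv, rfl⟩
    exact ⟨⟨v, hv⟩, rfl⟩
  · intro hcol
    exact hc ((col_iff.1 hcol).of_hom φ)
  · rintro _ ⟨u, hu, rfl⟩ w hw huw
    refine ⟨⟨w, hw⟩, ?_, rfl⟩
    exact (ConnectedComponent.mem_supp_congr_adj c (by simpa using huw)).1 hu

/-- A connected set sends an edge across every nontrivial bipartition of it. -/
lemma exists_boundary {S C : Set V} (hS : (G.induce S).Connected) {c z : V}
    (hcS : c ∈ S) (hcC : c ∈ C) (hz : z ∈ S) (hzC : z ∉ C) :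
    ∃ u ∈ C, ∃ q ∈ S, q ∉ C ∧ G.Adj q u := by
  obtain ⟨p⟩ := hS.preconnected ⟨c, hcS⟩ ⟨z, hz⟩
  obtain ⟨e, -, h1, h2⟩ := p.exists_boundary_dart {v | v.1 ∈ C} hcC hzC
  exact ⟨e.fst.1, h1, e.snd.1, e.snd.2, h2, by simpa using e.adj.symm⟩

/-- One Gyárfás step: from a vertex `q` attached to a connected set `C`, move to a neighbour
`c ∈ C` attached to a connected subset of `C` that avoids `N(q)`, at the cost of one colour. -/
lemma gyarfas_step (tri : ∀ x y z, G.Adj x y → G.Adj y z → G.Adj x z → False)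
    {C : Set V} (hC : (G.induce C).Connected) {q u : V} (hu : u ∈ C) (hqu : G.Adj q u)
    {n : ℕ} (hn : ¬ Col G C (n + 1)) :
    ∃ D ⊆ C, (G.induce D).Connected ∧ ¬ Col G D n ∧ (∀ w ∈ D, ¬ G.Adj q w) ∧
      ∃ c ∈ C, c ∉ D ∧ G.Adj q c ∧ ∃ w ∈ D, G.Adj c w := by
  obtain ⟨D, hDA, hD, hDn, hcomp⟩ :=
    exists_component (fun h => hn (col_of_diff_nbr tri q h))
  obtain ⟨⟨w, hw⟩⟩ := hD.nonempty
  obtain ⟨w', hw', c, hc, hcD, hcw⟩ :=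
    exists_boundary hC (hDA hw).1 hw hu (fun h => (hDA h).2 hqu)
  refine ⟨D, fun x hx => (hDA hx).1, hD, hDn, fun x hx => (hDA hx).2, c, hc, hcD, ?_, w', hw', hcw⟩
  by_contra hqc
  exact hcD (hcomp w' hw' c ⟨hc, hqc⟩ hcw.symm)

/-! ### Induced paths with a prescribed vertex set -/

/-- There is an induced path of length `n` from `u` to `w` with vertex set `T`. -/
def IndPath (G : SimpleGraph V) (u w : V) (n : ℕ) (T : Set V) : Prop :=
  ∃ p : G.Walk u w, IsInducedPathW p ∧ p.length = n ∧ ∀ z, z ∈ p.support ↔ z ∈ T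

lemma IndPath.nil (u : V) : IndPath G u u 0 {u} := by
  refine ⟨Walk.nil, ⟨by simp, ?_⟩, rfl, by simp⟩
  simp

lemma IndPath.end_mem {u w : V} {n : ℕ} {T : Set V} (h : IndPath G u w n T) : w ∈ T := by
  obtain ⟨p, -, -, h⟩ := h
  exact (h w).1 p.end_mem_support

lemma IndPath.start_mem {u w : V} {n : ℕ} {T : Set V} (h : IndPath G u w n T) : u ∈ T := by
  obtain ⟨p, -, -, h⟩ := h
  exact (h u).1 p.start_mem_support

lemma IndPath.snoc {u w v : V} {n : ℕ} {T : Set V} (h : IndPath G u w n T)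
    (hwv : G.Adj w v) (hv : v ∉ T) (hn : ∀ z ∈ T, G.Adj z v → z = w) :
    IndPath G u v (n + 1) (insert v T) := by
  obtain ⟨p, ⟨hp, hind⟩, hl, hT⟩ := h
  refine ⟨p.concat hwv, ⟨hp.concat (by rwa [hT]) hwv, ?_⟩, by simp [hl], ?_⟩
  · intro a ha b hb hab
    simp only [Walk.support_concat, List.concat_eq_append, List.mem_append, List.mem_singleton,
      Walk.edges_concat] at ha hb ⊢
    rcases ha with ha | rfl <;> rcases hb with hb | rfl
    · exact Or.inl (hind a ha b hb hab)
    · rw [hn a ((hT a).1 ha) hab]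
      exact Or.inr rfl
    · rw [hn b ((hT b).1 hb) hab.symm]
      exact Or.inr (Sym2.eq_swap)
    · exact (G.irrefl hab).elim
  · intro z
    simp [Walk.support_concat, hT, or_comm]

/-! ### Levels -/

/-- `d` is the distance from `x` in the connected induced subgraph `G[S]`, recorded by the
properties used: each vertex of positive level has a neighbour one level closer to `x`, and levels
change by at most one along edges. -/
structure Levels (G : SimpleGraph V) (S : Set V) (x : V) (d : V → ℕ) : Prop where
  root : x ∈ S
  zero : ∀ v ∈ S, d v = 0 → v = x
  parent : ∀ v ∈ S, ∀ n, d v = n + 1 → ∃ u ∈ S, G.Adj u v ∧ d u = n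
  step : ∀ u ∈ S, ∀ v ∈ S, G.Adj u v → d v ≤ d u + 1

lemma exists_levels {S : Set V} (hS : (G.induce S).Connected) {x : V} (hx : x ∈ S) :
    ∃ d, Levels G S x d := by
  classical
  refine ⟨fun v => if h : v ∈ S then (G.induce S).dist ⟨x, hx⟩ ⟨v, h⟩ else 0, hx, ?_, ?_, ?_⟩
  · intro v hv h
    simp only [hv, dif_pos] at h
    have := hS.dist_eq_zero_iff.1 h
    exact (congrArg Subtype.val this).symm
  · intro v hv n h
    simp only [hv, dif_pos] at h
    obtain ⟨p, hp⟩ := hS.exists_walk_length_eq_dist ⟨x, hx⟩ ⟨v, hv⟩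
    have hnn : ¬ p.Nil := fun h' => by
      have := Walk.length_eq_zero_iff.2 h'
      omega
    have hadj := p.adj_penultimate hnn
    have hlen := p.length_dropLast_add_one hnn
    have h1 := (G.induce S).dist_le p.dropLast
    have h2 := hS.dist_triangle (u := ⟨x, hx⟩) (v := p.penultimate) (w := ⟨v, hv⟩)
    rw [dist_eq_one_iff_adj.2 hadj] at h2
    refine ⟨p.penultimate.1, p.penultimate.2, by simpa using hadj, ?_⟩
    simp only [Subtype.coe_prop, dif_pos, Subtype.coe_eta]
    omega
  · intro u hu v hv huv
    simp only [hu, hv, dif_pos]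
    have h2 := hS.dist_triangle (u := ⟨x, hx⟩) (v := ⟨u, hu⟩) (w := ⟨v, hv⟩)
    rwa [dist_eq_one_iff_adj.2 (show (G.induce S).Adj ⟨u, hu⟩ ⟨v, hv⟩ from huv)] at h2

/-- Odd and even levels are coloured with disjoint palettes. -/
lemma Levels.col {S : Set V} {x : V} {d : V → ℕ} (hd : Levels G S x d) {n : ℕ}
    (h : ∀ k, Col G {v | v ∈ S ∧ d v = k} n) : Col G S (2 * n) := by
  choose f h1 h2 using h
  refine ⟨fun v => f (d v) v + n * (d v % 2), ?_, ?_⟩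
  · intro v hv
    have := h1 (d v) v ⟨hv, rfl⟩
    rcases Nat.mod_two_eq_zero_or_one (d v) with h | h <;> simp only [h] <;> omega
  · intro u hu v hv huv
    have hu1 := h1 (d u) u ⟨hu, rfl⟩
    have hv1 := h1 (d v) v ⟨hv, rfl⟩
    have s1 := hd.step u hu v hv huv
    have s2 := hd.step v hv u hu huv.symm
    by_cases he : d u = d v
    · have := h2 (d v) u ⟨hu, he⟩ v ⟨hv, rfl⟩ huv
      simp only [he]
      omega
    · rcases Nat.mod_two_eq_zero_or_one (d u) with h | h <;>
        rcases Nat.mod_two_eq_zero_or_one (d v) with h' | h' <;> simp only [h, h'] <;> omega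

/-- A geodesic from the root: an induced path meeting each level at most once. -/
lemma Levels.geodesic {S : Set V} {x : V} {d : V → ℕ} (hd : Levels G S x d) (n : ℕ) :
    ∀ v ∈ S, d v = n → ∃ T ⊆ S, IndPath G x v n T ∧ (∀ z ∈ T, d z ≤ n) ∧
      (∀ z ∈ T, ∀ w ∈ T, d z = d w → z = w) ∧ ∀ z ∈ T, d z + 1 = n → G.Adj z v := by
  induction n with
  | zero =>
    intro v hv h0
    obtain rfl := hd.zero v hv h0
    refine ⟨{v}, by simpa using hv, IndPath.nil v, ?_, ?_, ?_⟩
    · simp [h0]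
    · simp
    · simp
  | succ n ih =>
    intro v hv hn
    obtain ⟨u, hu, huv, hdu⟩ := hd.parent v hv n hn
    obtain ⟨T, hTS, hT, hle, hinj, hadj⟩ := ih u hu hdu
    have huT : u ∈ T := hT.end_mem
    refine ⟨insert v T, Set.insert_subset hv hTS, hT.snoc huv ?_ ?_, ?_, ?_, ?_⟩
    · intro hvT
      have := hle v hvT
      omega
    · intro z hz hzv
      have := hd.step z (hTS hz) v hv hzv
      have := hle z hz
      exact hinj z hz u huT (by omega)
    · rintro z (rfl | hz)
      · omega
      · have := hle z hz
        omega
    · rintro z (rfl | hz) w (rfl | hw) h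
      · rfl
      · have := hle w hw
        omega
      · have := hle z hz
        omega
      · exact hinj z hz w hw h
    · rintro z (rfl | hz) h
      · omega
      · rwa [hinj z hz u huT (by omega)]

/-! ### The first block -/

/-- In a graph without triangles and induced pentagons, attaching one neighbour to each end of an
edge never yields two vertices with a common neighbour. -/
lemma no_common (tri : ∀ x y z, G.Adj x y → G.Adj y z → G.Adj x z → False)
    (h5 : NoInducedCycle G 5) {a b a' b' p : V} (hab : G.Adj a b) (ha : G.Adj a' a)
    (hb : G.Adj b' b) (hpa : G.Adj p a') (hpb : G.Adj p b') : False := by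
  have n1 : ¬ G.Adj a' b := fun h => tri a' a b ha hab h
  have n2 : ¬ G.Adj a b' := fun h => tri a b b' hab hb.symm h
  have n3 : ¬ G.Adj p a := fun h => tri p a' a hpa ha h
  have n4 : ¬ G.Adj p b := fun h => tri p b' b hpb hb h
  have n5 : ¬ G.Adj a' b' := fun h => tri p a' b' hpa h hpb
  let f : Fin 5 → V := ![p, a', a, b, b']
  have key : ∀ i j, G.Adj (f i) (f j) ↔ (cycleGraph 5).Adj i j := by
    intro i j
    rw [cycleGraph_adj]
    fin_cases i <;> fin_cases j <;>
      simp [f, hab, hab.symm, ha, ha.symm, hb, hb.symm, hpa, hpa.symm, hpb, hpb.symm, n1, n2, n3,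
        n4, n5, G.adj_comm b a', G.adj_comm b' a, G.adj_comm a p, G.adj_comm b p,
        G.adj_comm b' a'] <;> decide
  have sep : ∀ i j : Fin 5, (∀ k, (cycleGraph 5).Adj i k ↔ (cycleGraph 5).Adj j k) → i = j := by
    simp only [cycleGraph_adj]
    decide
  refine h5.false ⟨⟨f, fun i j hij => sep i j fun k => ?_⟩, fun {i j} => key i j⟩
  rw [← key, ← key, hij]

/-- `a b` is an edge in level `m + 1`, `a'` and `b'` are parents of its ends, and `q` is a further
vertex of that level adjacent to `a` or `a'`. Two induced paths from `x` to `q` then run through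
the two geodesics and have different parities. The set `T` stands for the geodesic to `a'`,
the set `U` for the one to `b'`. -/
lemma parity {S : Set V} {x a b a' b' q : V} {d : V → ℕ} {m : ℕ} {T U : Set V}
    (tri : ∀ x y z, G.Adj x y → G.Adj y z → G.Adj x z → False) (h5 : NoInducedCycle G 5)
    (hT : IndPath G x a' m T) (hU : IndPath G x b' m U)
    (topT : ∀ v ∈ S, d v = m + 1 → v ∉ T ∧ ∀ z ∈ T, G.Adj z v → z = a')
    (topU : ∀ v ∈ S, d v = m + 1 → v ∉ U ∧ ∀ z ∈ U, G.Adj z v → z = b')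
    (haU : a' ∉ U) (haU' : ∀ z ∈ U, G.Adj z a' → z = b')
    (haS : a ∈ S) (hbS : b ∈ S) (hqS : q ∈ S) (hda : d a = m + 1) (hdb : d b = m + 1)
    (hdq : d q = m + 1) (hda' : d a' = m) (hdb' : d b' = m)
    (hab : G.Adj a b) (ha : G.Adj a' a) (hb : G.Adj b' b) (hqa : q ≠ a) (hqb : q ≠ b)
    (hq : G.Adj a q ∨ G.Adj a' q ∧ ¬ G.Adj b q) :
    ∃ n n' T₁ T₂, IndPath G x q n T₁ ∧ IndPath G x q n' T₂ ∧ T₁ ⊆ T ∪ U ∪ {a, b, q} ∧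
      T₂ ⊆ T ∪ U ∪ {a, b, q} ∧ (n + n') % 2 = 1 := by
  obtain ⟨aT, aT'⟩ := topT a haS hda
  obtain ⟨qT, qT'⟩ := topT q hqS hdq
  obtain ⟨bU, bU'⟩ := topU b hbS hdb
  obtain ⟨aU, aU'⟩ := topU a haS hda
  obtain ⟨qU, qU'⟩ := topU q hqS hdq
  have ea' : a' ∈ T := hT.end_mem
  have n1 : ¬ G.Adj a' b := fun h => tri a' a b ha hab h
  have n2 : ¬ G.Adj b' a := fun h => tri b' a b h hab hb
  have nq : a' ≠ q := by rintro rfl; omega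
  have nb : a' ≠ b := by rintro rfl; omega
  have naa : a' ≠ a := ha.ne
  rcases hq with haq | ⟨haq, hbq⟩
  · have n3 : ¬ G.Adj b q := fun h => tri a b q hab h haq
    have n4 : ¬ G.Adj a' q := fun h => tri a' a q ha haq h
    have P1 : IndPath G x q (m + 1 + 1) (insert q (insert a T)) := by
      refine (hT.snoc ha aT aT').snoc haq ?_ ?_
      · simp [hqa, qT]
      · rintro z (rfl | hz) hzq
        · rfl
        · exact (n4 (qT' z hz hzq ▸ hzq)).elim
    by_cases hbq' : G.Adj b' q
    · have P2 := hU.snoc hbq' qU qU'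
      refine ⟨_, _, _, _, P1, P2, ?_, ?_, by omega⟩ <;> intro z <;> simp <;> tauto
    · have P2 : IndPath G x q (m + 1 + 1 + 1) (insert q (insert a (insert b U))) := by
        refine ((hU.snoc hb bU bU').snoc hab.symm ?_ ?_).snoc haq ?_ ?_
        · simp [hab.ne, aU]
        · rintro z (rfl | hz) hza
          · rfl
          · exact (n2 (aU' z hz hza ▸ hza)).elim
        · simp [hqa, hqb, qU]
        · rintro z (rfl | rfl | hz) hzq
          · rfl
          · exact (n3 hzq).elim
          · exact (hbq' (qU' z hz hzq ▸ hzq)).elim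
      refine ⟨_, _, _, _, P1, P2, ?_, ?_, by omega⟩ <;> intro z <;> simp <;> tauto
  · have P1 := hT.snoc haq qT qT'
    have n3 : ¬ G.Adj b' q := fun h => no_common tri h5 hab ha hb haq.symm h.symm
    have n4 : ¬ G.Adj a q := fun h => tri a' a q ha h haq
    by_cases hab' : G.Adj b' a'
    · have P2 : IndPath G x q (m + 1 + 1) (insert q (insert a' U)) := by
        refine (hU.snoc hab' haU haU').snoc haq ?_ ?_
        · simp [nq.symm, qU]
        · rintro z (rfl | hz) hzq
          · rfl
          · exact (n3 (qU' z hz hzq ▸ hzq)).elim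
      refine ⟨_, _, _, _, P1, P2, ?_, ?_, by omega⟩
      · intro z; simp; tauto
      · rintro z (rfl | rfl | hz) <;> simp [*]
    · have P2 : IndPath G x q (m + 1 + 1 + 1 + 1)
          (insert q (insert a' (insert a (insert b U)))) := by
        refine (((hU.snoc hb bU bU').snoc hab.symm ?_ ?_).snoc ha.symm ?_ ?_).snoc haq ?_ ?_
        · simp [hab.ne, aU]
        · rintro z (rfl | hz) hza
          · rfl
          · exact (n2 (aU' z hz hza ▸ hza)).elim
        · simp [naa, nb, haU]
        · rintro z (rfl | rfl | hz) hza
          · rfl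
          · exact (n1 hza.symm).elim
          · exact (hab' (haU' z hz hza ▸ hza)).elim
        · simp [nq.symm, hqa, hqb, qU]
        · rintro z (rfl | rfl | rfl | hz) hzq
          · rfl
          · exact (n4 hzq).elim
          · exact (hbq hzq).elim
          · exact (n3 (qU' z hz hzq ▸ hzq)).elim
      refine ⟨_, _, _, _, P1, P2, ?_, ?_, by omega⟩
      · intro z; simp; tauto
      · rintro z (rfl | rfl | rfl | rfl | hz) <;> simp [*]

/-- The data by which a PCP living in `H` and starting at `t` is extended backwards: a regular
block `B` containing `x` and `y`, and the path `y c t` leading to `H`. -/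
structure Link (G : SimpleGraph V) (S : Set V) (x : V) (B H : Set V) (y c t : V) : Prop where
  B_sub : B ⊆ S
  H_sub : H ⊆ S
  c_mem : c ∈ S
  x_mem : x ∈ B
  y_mem : y ∈ B
  t_mem : t ∈ H
  yc : G.Adj y c
  ct : G.Adj c t
  c_notB : c ∉ B
  c_notH : c ∉ H
  disj : ∀ v ∈ B, v ∉ H
  noBH : ∀ u ∈ B, ∀ v ∈ H, ¬ G.Adj u v
  cB : ∀ u ∈ B, G.Adj u c → u = y
  cH : ∀ u ∈ H, G.Adj c u → u = t
  odd : ∃ p : G.Walk x y, IsInducedPathW p ∧ (∀ w ∈ p.support, w ∈ B) ∧ Odd p.length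
  even : ∃ p : G.Walk x y, IsInducedPathW p ∧ (∀ w ∈ p.support, w ∈ B) ∧ Even p.length
  conn : (G.induce H).Connected
  chrom : (G.induce B).chromaticNumber ≤ 4

/-- Six colours are lost in reaching `H` from a level of chromatic number more than `n + 6`, and
passing to a level costs a factor of two. -/
lemma exists_link {S : Set V} {x : V}
    (tri : ∀ x y z, G.Adj x y → G.Adj y z → G.Adj x z → False) (h5 : NoInducedCycle G 5)
    (hS : (G.induce S).Connected) (hx : x ∈ S) {n : ℕ} (hn : ¬ Col G S (2 * (n + 6))) :
    ∃ B H y c t, Link G S x B H y c t ∧ ¬ Col G H n := by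
  classical
  obtain ⟨d, hd⟩ := exists_levels hS hx
  obtain ⟨k, hk⟩ : ∃ k, ¬ Col G {v | v ∈ S ∧ d v = k} (n + 6) := by
    by_contra! h
    exact hn (hd.col h)
  obtain ⟨L, hLk, hL, hLn, -⟩ := exists_component hk
  obtain ⟨a, haL, b, hbL, hab⟩ : ∃ a ∈ L, ∃ b ∈ L, G.Adj a b := by
    by_contra! h
    exact hLn ⟨fun _ => 0, fun _ _ => Nat.succ_pos _, fun u hu v hv huv => (h u hu v hv huv).elim⟩
  have haS := (hLk haL).1
  have hbS := (hLk hbL).1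
  obtain ⟨m, rfl⟩ : ∃ m, k = m + 1 := by
    rcases k with _ | m
    · have h1 := hd.zero a haS (hLk haL).2
      have h2 := hd.zero b hbS (hLk hbL).2
      exact (hab.ne (h1.trans h2.symm)).elim
    · exact ⟨m, rfl⟩
  have hda : d a = m + 1 := (hLk haL).2
  have hdb : d b = m + 1 := (hLk hbL).2
  obtain ⟨a', haS', ha, hda'⟩ := hd.parent a haS m hda
  obtain ⟨b', hbS', hb, hdb'⟩ := hd.parent b hbS m hdb
  have hne : a' ≠ b' := by
    rintro rfl
    exact tri a' a b ha hab hb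
  obtain ⟨T, hTS, hT, hTle, hTinj, hTadj⟩ := hd.geodesic m a' haS' hda'
  obtain ⟨U, hUS, hU, hUle, hUinj, hUadj⟩ := hd.geodesic m b' hbS' hdb'
  have top : ∀ {W : Set V} {w : V}, W ⊆ S → w ∈ W → d w = m → (∀ z ∈ W, d z ≤ m) →
      (∀ z ∈ W, ∀ w ∈ W, d z = d w → z = w) →
      ∀ v ∈ S, d v = m + 1 → v ∉ W ∧ ∀ z ∈ W, G.Adj z v → z = w := by
    intro W w hWS hw hdw hle hinj v hv hdv
    refine ⟨fun h => ?_, fun z hz hzv => ?_⟩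
    · have := hle v h
      omega
    · have := hd.step z (hWS hz) v hv hzv
      have := hle z hz
      exact hinj z hz w hw (by omega)
  have topT := top hTS hT.end_mem hda' hTle hTinj
  have topU := top hUS hU.end_mem hdb' hUle hUinj
  -- Each of `a'`, `b'` avoids the geodesic to the other and has at most the other as a neighbour
  -- on it, for otherwise `a'` and `b'` have a common neighbour.
  have haU : a' ∉ U := fun h => hne (hUinj a' h b' hU.end_mem (by omega))
  have hbT : b' ∉ T := fun h => hne.symm (hTinj b' h a' hT.end_mem (by omega))
  have haU' : ∀ z ∈ U, G.Adj z a' → z = b' := by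
    intro z hz hza
    have h1 := hd.step z (hUS hz) a' haS' hza
    have h2 := hUle z hz
    by_cases h : d z = m
    · exact hUinj z hz b' hU.end_mem (by omega)
    · exact (no_common tri h5 hab ha hb hza (hUadj z hz (by omega))).elim
  have hbT' : ∀ z ∈ T, G.Adj z b' → z = a' := by
    intro z hz hzb
    have h1 := hd.step z (hTS hz) b' hbS' hzb
    have h2 := hTle z hz
    by_cases h : d z = m
    · exact hTinj z hz a' hT.end_mem (by omega)
    · exact (no_common tri h5 hab ha hb (hTadj z hz (by omega)) hzb).elim
  -- Delete the four neighbourhoods, keep a component, and attach it through a vertex `q`.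
  obtain ⟨C, hCA, hC, hCn, hcomp⟩ := exists_component (fun h => hLn
    (col_of_diff_nbr tri a (col_of_diff_nbr tri b (col_of_diff_nbr tri a'
      (col_of_diff_nbr tri b' (n := n + 2) h)))))
  have hCL : C ⊆ L := fun v hv => (hCA hv).1.1.1.1
  have hCa : ∀ v ∈ C, ¬ G.Adj a v := fun v hv => (hCA hv).1.1.1.2
  have hCb : ∀ v ∈ C, ¬ G.Adj b v := fun v hv => (hCA hv).1.1.2
  have hCa' : ∀ v ∈ C, ¬ G.Adj a' v := fun v hv => (hCA hv).1.2
  have hCb' : ∀ v ∈ C, ¬ G.Adj b' v := fun v hv => (hCA hv).2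
  have haC : a ∉ C := fun h => hCb a h hab.symm
  have hbC : b ∉ C := fun h => hCa b h hab
  obtain ⟨⟨w, hw⟩⟩ := hC.nonempty
  obtain ⟨u, huC, q, hqL, hqC, hqu⟩ := exists_boundary hL (hCL hw) hw haL haC
  have hqN : (G.Adj a q ∨ G.Adj a' q ∧ ¬ G.Adj b q) ∨
      (G.Adj b q ∨ G.Adj b' q ∧ ¬ G.Adj a q) := by
    by_contra hcon
    refine hqC (hcomp u huC q ⟨⟨⟨⟨hqL, ?_⟩, ?_⟩, ?_⟩, ?_⟩ hqu.symm) <;>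
      simp only [Set.mem_ofPred_eq] <;> tauto
  have hqa : q ≠ a := by
    rintro rfl
    exact hCa u huC hqu
  have hqb : q ≠ b := by
    rintro rfl
    exact hCb u huC hqu
  have hqS := (hLk hqL).1
  have hdq : d q = m + 1 := (hLk hqL).2
  obtain ⟨l, l', T₁, T₂, hP1, hP2, hT1, hT2, hpar⟩ :
      ∃ l l' T₁ T₂, IndPath G x q l T₁ ∧ IndPath G x q l' T₂ ∧ T₁ ⊆ T ∪ U ∪ {a, b, q} ∧
        T₂ ⊆ T ∪ U ∪ {a, b, q} ∧ (l + l') % 2 = 1 := by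
    rcases hqN with hq | hq
    · exact parity tri h5 hT hU topT topU haU haU' haS hbS hqS hda hdb hdq hda' hdb' hab ha hb
        hqa hqb hq
    · have := parity tri h5 hU hT topU topT hbT hbT' hbS haS hqS hdb hda hdq hdb' hda' hab.symm
        hb ha hqb hqa hq
      rwa [Set.union_comm U T, Set.insert_comm b a] at this
  obtain ⟨D, hDC, hD, hDn, hqD, c, hcC, hcD, hqc, w₁, hw1, hcw⟩ :=
    gyarfas_step tri hC huC hqu hCn
  obtain ⟨E, hED, hE, hEn, hcE, t, htD, htE, hct, w₂, hw2, htw⟩ :=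
    gyarfas_step tri hD hw1 hcw hDn
  have hBS : T ∪ U ∪ {a, b, q} ⊆ S := by
    rintro z ((hz | hz) | rfl | rfl | rfl)
    exacts [hTS hz, hUS hz, haS, hbS, hqS]
  -- Only `q` has neighbours in `C` among the vertices of the block.
  have hBC : ∀ z ∈ T ∪ U ∪ {a, b, q}, ∀ v ∈ C, (z = v → False) ∧ (G.Adj z v → z = q) := by
    have hBC0 : ∀ v ∈ C, v ∈ S ∧ d v = m + 1 := fun v hv => hLk (hCL hv)
    intro z hz v hv
    obtain ⟨hvS, hdv⟩ := hBC0 v hv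
    rcases hz with (hz | hz) | rfl | rfl | rfl
    · refine ⟨fun h => (topT v hvS hdv).1 (h ▸ hz), fun h => ?_⟩
      exact (hCa' v hv ((topT v hvS hdv).2 z hz h ▸ h)).elim
    · refine ⟨fun h => (topU v hvS hdv).1 (h ▸ hz), fun h => ?_⟩
      exact (hCb' v hv ((topU v hvS hdv).2 z hz h ▸ h)).elim
    · exact ⟨fun h => haC (h ▸ hv), fun h => (hCa v hv h).elim⟩
    · exact ⟨fun h => hbC (h ▸ hv), fun h => (hCb v hv h).elim⟩
    · exact ⟨fun h => hqC (h ▸ hv), fun _ => rfl⟩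
  have hHD : insert t E ⊆ D := Set.insert_subset htD hED
  refine ⟨T ∪ U ∪ {a, b, q}, insert t E, q, c, t, ?_, fun h => hEn (h.mono (by simp) le_rfl)⟩
  have paths : ∀ r, ∃ p : G.Walk x q, IsInducedPathW p ∧
      (∀ w ∈ p.support, w ∈ T ∪ U ∪ {a, b, q}) ∧ p.length % 2 = r % 2 := by
    intro r
    obtain ⟨p₁, i1, e1, s1⟩ := hP1
    obtain ⟨p₂, i2, e2, s2⟩ := hP2
    by_cases h : l % 2 = r % 2
    · exact ⟨p₁, i1, fun w hw => hT1 ((s1 w).1 hw), by omega⟩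
    · exact ⟨p₂, i2, fun w hw => hT2 ((s2 w).1 hw), by omega⟩
  refine
    { B_sub := hBS
      H_sub := fun v hv => (hLk (hCL (hDC (hHD hv)))).1
      c_mem := (hLk (hCL hcC)).1
      x_mem := Or.inl (Or.inl hT.start_mem)
      y_mem := by simp
      t_mem := by simp
      yc := hqc
      ct := hct
      c_notB := fun h => (hBC c h c hcC).1 rfl
      c_notH := fun h => hcD (hHD h)
      disj := fun v hv h => (hBC v hv v (hDC (hHD h))).1 rfl
      noBH := fun u hu v hv huv => hqD v (hHD hv)
        ((hBC u hu v (hDC (hHD hv))).2 huv ▸ huv)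
      cB := fun u hu huc => (hBC u hu c hcC).2 huc
      cH := ?_
      odd := ?_
      even := ?_
      conn := ?_
      chrom := ?_ }
  · rintro u (rfl | hu) hcu
    · rfl
    · exact (hcE u hu hcu).elim
  · obtain ⟨p, h1, h2, h3⟩ := paths 1
    exact ⟨p, h1, h2, Nat.odd_iff.2 h3⟩
  · obtain ⟨p, h1, h2, h3⟩ := paths 0
    exact ⟨p, h1, h2, Nat.even_iff.2 h3⟩
  · have := connected_induce_union (G := G) (s := {t}) (t := E) (v := t) (w := w₂)
      Preconnected.of_subsingleton hE.preconnected rfl hw2 htw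
    rwa [Set.singleton_union] at this
  · -- Every level of the block spans a bipartite graph: levels up to `m` have one vertex on each
    -- geodesic, and `{a, b, q}` is not a triangle. The parity of the level is the low bit of
    -- the colour.
    obtain ⟨s, hs, hsq⟩ : ∃ s ∈ ({a, b} : Set V), ¬ G.Adj s q := by
      by_cases h : G.Adj a q
      · exact ⟨b, by simp, fun h' => tri a b q hab h' h⟩
      · exact ⟨a, by simp, h⟩
    have hds : d s = m + 1 := by
      rcases hs with rfl | rfl <;> assumption
    rw [show (4 : ℕ∞) = ((4 : ℕ) : ℕ∞) from rfl, chromaticNumber_le_iff_colorable, ← col_iff]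
    refine ⟨fun v => (if v ∈ T ∨ v = q ∨ v = s then 2 else 0) + d v % 2, ?_, ?_⟩
    · intro v _
      beta_reduce
      split_ifs <;> omega
    · intro u hu v hv huv heq
      beta_reduce at heq
      have s1 := hd.step u (hBS hu) v (hBS hv) huv
      have s2 := hd.step v (hBS hv) u (hBS hu) huv.symm
      have hduv : d u = d v := by
        split_ifs at heq <;> omega
      have hiff : (u ∈ T ∨ u = q ∨ u = s) ↔ (v ∈ T ∨ v = q ∨ v = s) := by
        by_cases h1 : (u ∈ T ∨ u = q ∨ u = s) <;> by_cases h2 : (v ∈ T ∨ v = q ∨ v = s) <;>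
          simp only [h1, h2, if_true, if_false] at heq ⊢ <;> omega
      have huvne := huv.ne
      have hsq' : ¬ G.Adj q s := fun h => hsq h.symm
      have key : ∀ z ∈ T ∪ U ∪ {a, b, q}, (z ∈ T ∧ d z ≤ m) ∨ (z ∈ U ∧ d z ≤ m) ∨
          (d z = m + 1 ∧ (z = a ∨ z = b ∨ z = q)) := by
        rintro z ((hz | hz) | rfl | rfl | rfl)
        · exact Or.inl ⟨hz, hTle z hz⟩
        · exact Or.inr (Or.inl ⟨hz, hUle z hz⟩)
        all_goals simp [*]
      have hTm : ∀ z ∈ T, d z ≠ m + 1 := fun z hz => by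
        have := hTle z hz
        omega
      have hI := hTinj u
      have hJ := hUinj u
      have hTu := hTm u
      have hTv := hTm v
      have ku := key u hu
      have kv := key v hv
      clear heq s1 s2 key hTm
      rcases hs with rfl | rfl <;> grind

/-! ### Assembling the PCP -/

/-- Prepending a block and a path of length two to a PCP. -/
lemma prepend {S B H : Set V} {x y c t : V} (hl : Link G S x B H y c t) {ℓ : ℕ} (P : PCP G ℓ)
    (hP : P.support ⊆ H) (ht : P.x 0 = t) :
    ∃ Q : PCP G (ℓ + 1), Q.support ⊆ S ∧ Q.origin = x ∧ Q.leftovers = P.leftovers := by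
  subst ht
  have hB : ∀ i, ∀ w ∈ P.block i, w ∈ H := fun i w hw =>
    hP (Or.inl (Or.inl (Set.mem_iUnion.2 ⟨i, hw⟩)))
  have hL : ∀ w ∈ P.lastBlock, w ∈ H := fun w hw => hP (Or.inl (Or.inr hw))
  have hW : ∀ i, ∀ w ∈ (P.path i).support, w ∈ H := fun i w hw =>
    hP (Or.inr (Set.mem_iUnion.2 ⟨i, hw⟩))
  have cH : ∀ w ∈ H, w ≠ c := fun w hw h => hl.c_notH (h ▸ hw)
  have yH : ∀ w ∈ H, w ≠ y := fun w hw h => hl.disj y hl.y_mem (h ▸ hw)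
  -- The origin of `P` lies in the first block of `P`, or in the last block if there is no other.
  have x0_block : ∀ i : Fin ℓ, P.x 0 ∈ P.block i → (i : ℕ) = 0 := by
    intro i hi
    cases ℓ with
    | zero => exact i.elim0
    | succ ℓ =>
      by_contra hne
      have h0 := P.blocks_disjoint i 0 (fun h => hne (by simp [h]))
      exact Set.disjoint_left.1 h0 hi (P.x_mem 0)
  have x0_last : P.x 0 ∈ P.lastBlock → ℓ = 0 := by
    intro hi
    cases ℓ with
    | zero => rfl
    | succ ℓ => exact (Set.disjoint_left.1 (P.block_last_disjoint 0) (P.x_mem 0) hi).elim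
  -- An induced path of odd length has distinct ends, so the origin is not on the first path.
  have x0_path : ∀ j : Fin ℓ, P.x 0 ∉ (P.path j).support := by
    intro j hj
    cases ℓ with
    | zero => exact j.elim0
    | succ ℓ =>
      rcases P.block_path_inter 0 j (P.x 0) (P.x_mem 0) hj with ⟨-, h⟩ | ⟨h, -⟩
      · obtain ⟨p, hp, -, hodd⟩ := P.odd_path 0
        have hnil : p.length = 0 := by
          have key : ∀ {u v : V} (p : G.Walk u v), p.IsPath → u = v → p.length = 0 := by
            rintro u _ p hp rfl
            exact Walk.length_eq_zero_iff.2 (Walk.isPath_iff_nil.1 hp)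
          exact key p hp.1 h
        rw [hnil] at hodd
        exact absurd hodd (by decide)
      · simp at h
  let W : G.Walk y (P.x 0) := Walk.cons hl.yc (Walk.cons hl.ct Walk.nil)
  have hWs : ∀ w, w ∈ W.support ↔ w = y ∨ w = c ∨ w = P.x 0 := by
    intro w
    simp [W]
  have hyt : y ≠ P.x 0 := fun h => yH _ hl.t_mem h.symm
  have hyc : y ≠ c := hl.yc.ne
  have hct : c ≠ P.x 0 := hl.ct.ne
  have hyt' : ¬ G.Adj y (P.x 0) := hl.noBH y hl.y_mem _ hl.t_mem
  have hWind : IsInducedPathW W := by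
    refine ⟨by simp [W, hyt, hyc, hct], ?_⟩
    intro a ha b hb hab
    rw [hWs] at ha hb
    rcases ha with rfl | rfl | rfl <;> rcases hb with rfl | rfl | rfl <;>
      first
      | exact (G.irrefl hab).elim
      | exact (hyt' hab).elim
      | exact (hyt' hab.symm).elim
      | simp [W]
  let block : Fin (ℓ + 1) → Set V := Fin.cons B P.block
  let xs : Fin (ℓ + 2) → V := Fin.cons x P.x
  let ys : Fin (ℓ + 1) → V := Fin.cons y P.y
  let path : (i : Fin (ℓ + 1)) → G.Walk (ys i) (xs i.succ) :=
    Fin.cases (motive := fun i => G.Walk (ys i) (xs i.succ)) W P.path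
  -- Inside the new PCP, vertices outside `H` lie in `B` or equal `c`.
  have supp : ∀ a, a ∈ (⋃ i, block i) ∪ P.lastBlock ∪ (⋃ i, {w | w ∈ (path i).support}) →
      a ∈ B ∨ a = c ∨ (a ∈ P.support ∧ a ∈ H) ∨ a = P.x 0 := by
    intro a ha
    rcases ha with (ha | ha) | ha
    · obtain ⟨i, hi⟩ := Set.mem_iUnion.1 ha
      cases i using Fin.cases with
      | zero => exact Or.inl hi
      | succ i => exact Or.inr (Or.inr (Or.inl
          ⟨Or.inl (Or.inl (Set.mem_iUnion.2 ⟨i, hi⟩)), hB i a hi⟩))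
    · exact Or.inr (Or.inr (Or.inl ⟨Or.inl (Or.inr ha), hL a ha⟩))
    · obtain ⟨i, hi⟩ := Set.mem_iUnion.1 ha
      cases i using Fin.cases with
      | zero =>
        rcases (hWs a).1 hi with rfl | rfl | rfl
        · exact Or.inl hl.y_mem
        · exact Or.inr (Or.inl rfl)
        · exact Or.inr (Or.inr (Or.inr rfl))
      | succ i => exact Or.inr (Or.inr (Or.inl
          ⟨Or.inr (Set.mem_iUnion.2 ⟨i, hi⟩), hW i a hi⟩))
  have x0_supp : P.x 0 ∈ P.support := by
    cases ℓ with
    | zero => exact Or.inl (Or.inr P.xlast_mem)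
    | succ ℓ => exact Or.inl (Or.inl (Set.mem_iUnion.2 ⟨0, P.x_mem 0⟩))
  have supp' : ∀ a, a ∈ (⋃ i, block i) ∪ P.lastBlock ∪ (⋃ i, {w | w ∈ (path i).support}) →
      a ∈ B ∨ a = c ∨ (a ∈ P.support ∧ a ∈ H) := by
    intro a ha
    rcases supp a ha with h | h | h | rfl
    exacts [Or.inl h, Or.inr (Or.inl h), Or.inr (Or.inr h), Or.inr (Or.inr ⟨x0_supp, hl.t_mem⟩)]
  have inW : ∀ a b, (a = y ∨ a = c ∨ a = P.x 0) → (b = y ∨ b = c ∨ b = P.x 0) →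
      ∃ i, a ∈ (path i).support ∧ b ∈ (path i).support :=
    fun a b ha hb => ⟨0, (hWs a).2 ha, (hWs b).2 hb⟩
  let Q : PCP G (ℓ + 1) :=
    { block := block
      lastBlock := P.lastBlock
      x := xs
      y := ys
      path := path
      x_mem := Fin.cases hl.x_mem P.x_mem
      y_mem := Fin.cases hl.y_mem P.y_mem
      xlast_mem := P.xlast_mem
      path_induced := Fin.cases hWind P.path_induced
      path_length := Fin.cases le_rfl P.path_length
      blocks_disjoint := by
        intro i j hij
        cases i using Fin.cases with
        | zero =>
          cases j using Fin.cases with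
          | zero => exact (hij rfl).elim
          | succ j => exact Set.disjoint_left.2 fun v hv hv' => hl.disj v hv (hB j v hv')
        | succ i =>
          cases j using Fin.cases with
          | zero => exact Set.disjoint_left.2 fun v hv hv' => hl.disj v hv' (hB i v hv)
          | succ j => exact P.blocks_disjoint i j (fun h => hij (congrArg Fin.succ h))
      block_last_disjoint := Fin.cases
        (Set.disjoint_left.2 fun v hv hv' => hl.disj v hv (hL v hv')) P.block_last_disjoint
      block_path_inter := by
        intro i j w hw hwj
        cases i using Fin.cases with
        | zero =>
          cases j using Fin.cases with
          | zero =>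
            left
            refine ⟨rfl, ?_⟩
            rcases (hWs w).1 hwj with rfl | rfl | rfl
            · rfl
            · exact (hl.c_notB hw).elim
            · exact (hl.disj _ hw hl.t_mem).elim
          | succ j => exact (hl.disj w hw (hW j w hwj)).elim
        | succ i =>
          have hwi : w ∈ P.block i := hw
          cases j using Fin.cases with
          | zero =>
            right
            rcases (hWs w).1 hwj with rfl | rfl | rfl
            · exact (yH _ (hB i _ hwi) rfl).elim
            · exact (cH _ (hB i _ hwi) rfl).elim
            · have h0 := x0_block i hwi
              refine ⟨by simp [h0], ?_⟩
              have hi : i.castSucc = 0 := Fin.ext (by simpa using h0)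
              change P.x 0 = P.x i.castSucc
              rw [hi]
          | succ j =>
            rcases P.block_path_inter i j w hwi hwj with ⟨h1, h2⟩ | ⟨h1, h2⟩
            · exact Or.inl ⟨congrArg Fin.succ h1, h2⟩
            · exact Or.inr ⟨by simp [h1], h2⟩
      last_path_inter := by
        intro j w hw hwj
        cases j using Fin.cases with
        | zero =>
          rcases (hWs w).1 hwj with rfl | rfl | rfl
          · exact (yH _ (hL _ hw) rfl).elim
          · exact (cH _ (hL _ hw) rfl).elim
          · obtain rfl := x0_last hw
            exact ⟨rfl, rfl⟩
        | succ j =>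
          obtain ⟨h1, h2⟩ := P.last_path_inter j w hw hwj
          exact ⟨by simp [h1], h2⟩
      paths_disjoint := by
        have aux : ∀ j w, w ∈ W.support → w ∈ (P.path j).support → False := by
          intro j w hw hwj
          rcases (hWs w).1 hw with rfl | rfl | rfl
          · exact yH _ (hW j _ hwj) rfl
          · exact cH _ (hW j _ hwj) rfl
          · exact x0_path j hwj
        intro i j hij w hwi hwj
        cases i using Fin.cases with
        | zero =>
          cases j using Fin.cases with
          | zero => exact hij rfl
          | succ j => exact aux j w hwi hwj
        | succ i =>
          cases j using Fin.cases with
          | zero => exact aux i w hwj hwi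
          | succ j => exact P.paths_disjoint i j (fun h => hij (congrArg Fin.succ h)) w hwi hwj
      edges_within := by
        intro a b ha hb hab
        rcases supp' a ha with ha1 | rfl | ⟨ha1, haH⟩ <;> rcases supp' b hb with hb1 | rfl | ⟨hb1, hbH⟩
        · exact Or.inl ⟨0, ha1, hb1⟩
        · exact Or.inr (Or.inr (inW _ _ (Or.inl (hl.cB a ha1 hab)) (Or.inr (Or.inl rfl))))
        · exact (hl.noBH a ha1 b hbH hab).elim
        · exact Or.inr (Or.inr (inW _ _ (Or.inr (Or.inl rfl)) (Or.inl (hl.cB b hb1 hab.symm))))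
        · exact (G.irrefl hab).elim
        · exact Or.inr (Or.inr (inW _ _ (Or.inr (Or.inl rfl)) (Or.inr (Or.inr (hl.cH b hbH hab)))))
        · exact (hl.noBH b hb1 a haH hab.symm).elim
        · exact Or.inr (Or.inr
            (inW _ _ (Or.inr (Or.inr (hl.cH a haH hab.symm))) (Or.inr (Or.inl rfl))))
        · rcases P.edges_within a b ha1 hb1 hab with ⟨i, h⟩ | h | ⟨i, h⟩
          · exact Or.inl ⟨i.succ, h⟩
          · exact Or.inr (Or.inl h)
          · exact Or.inr (Or.inr ⟨i.succ, h⟩)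
      odd_path := Fin.cases hl.odd P.odd_path
      even_path := Fin.cases hl.even P.even_path
      last_connected := P.last_connected
      block_chrom := Fin.cases hl.chrom P.block_chrom }
  refine ⟨Q, fun a ha => ?_, rfl, rfl⟩
  rcases supp' a ha with h | rfl | ⟨-, h⟩
  exacts [hl.B_sub h, hl.c_mem, hl.H_sub h]

/-- The PCP of order `0`: a connected set on its own. -/
def trivialPCP {S : Set V} (hS : (G.induce S).Connected) {x : V} (hx : x ∈ S) : PCP G 0 where
  block := Fin.elim0
  lastBlock := S
  x := fun _ => x
  y := Fin.elim0
  path := fun i => i.elim0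
  x_mem := fun i => i.elim0
  y_mem := fun i => i.elim0
  xlast_mem := hx
  path_induced := fun i => i.elim0
  path_length := fun i => i.elim0
  blocks_disjoint := fun i => i.elim0
  block_last_disjoint := fun i => i.elim0
  block_path_inter := fun i => i.elim0
  last_path_inter := fun i => i.elim0
  paths_disjoint := fun i => i.elim0
  edges_within := by
    intro a b ha hb _
    simp only [Set.iUnion_of_empty, Set.empty_union, Set.union_empty] at ha hb
    exact Or.inr (Or.inl ⟨ha, hb⟩)
  odd_path := fun i => i.elim0
  even_path := fun i => i.elim0
  last_connected := hS
  block_chrom := fun i => i.elim0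

lemma trivialPCP_support {S : Set V} (hS : (G.induce S).Connected) {x : V} (hx : x ∈ S) :
    (trivialPCP hS hx).support = S := by
  simp [trivialPCP, PCP.support]

lemma lt_chiSet_iff [Fintype V] {A : Set V} {n : ℕ} : n < chiSet G A ↔ ¬ Col G A n := by
  classical
  obtain ⟨k, hk⟩ := ENat.ne_top_iff_exists.1
    (chromaticNumber_ne_top_iff_exists.2 ⟨_, colorable_of_fintype (G.induce A)⟩)
  rw [col_iff, ← chromaticNumber_le_iff_colorable, chiSet, ← hk, ENat.toNat_natCast, Nat.cast_le,
    not_le]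

lemma iterate_mono (ℓ : ℕ) : Monotone (fun x : ℝ => x / 2 - 8)^[ℓ] :=
  Monotone.iterate (fun x y h => by linarith) ℓ

lemma le_of_le_iterate (ℓ : ℕ) (x : ℝ) (h : 18 ≤ (fun x : ℝ => x / 2 - 8)^[ℓ] x) : 18 ≤ x := by
  induction ℓ generalizing x with
  | zero => exact h
  | succ ℓ ih =>
    have := ih _ h
    dsimp only at this
    linarith

/-- Growing a PCP inside a connected set, by induction on the order. -/
lemma exists_pcp [Fintype V] (tri : ∀ x y z, G.Adj x y → G.Adj y z → G.Adj x z → False)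
    (h5 : NoInducedCycle G 5) (ℓ : ℕ) :
    ∀ (S : Set V) (x : V), (G.induce S).Connected → x ∈ S →
      (ℓ = 0 ∨ (18 : ℝ) ≤ (fun x : ℝ => x / 2 - 8)^[ℓ - 1] (chiSet G S : ℝ)) →
      ∃ P : PCP G ℓ, P.support ⊆ S ∧ P.origin = x ∧
        (fun x : ℝ => x / 2 - 8)^[ℓ] (chiSet G S : ℝ) ≤ (P.leftovers : ℝ) := by
  induction ℓ with
  | zero =>
    intro S x hS hx _
    exact ⟨trivialPCP hS hx, (trivialPCP_support hS hx).subset, rfl, le_rfl⟩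
  | succ ℓ ih =>
    intro S x hS hx h
    have h : (18 : ℝ) ≤ (fun x : ℝ => x / 2 - 8)^[ℓ] (chiSet G S : ℝ) := by
      simpa using h
    have h18 : 18 ≤ chiSet G S := by exact_mod_cast le_of_le_iterate ℓ _ h
    -- The largest `n` for which more than `2 * (n + 6)` colours are needed.
    obtain ⟨n, hn1, hn2⟩ : ∃ n, 2 * (n + 6) < chiSet G S ∧ chiSet G S ≤ 2 * (n + 7) :=
      ⟨(chiSet G S - 13) / 2, by omega, by omega⟩
    obtain ⟨B, H, y, c, t, hl, hH⟩ := exists_link tri h5 hS hx (lt_chiSet_iff.1 hn1)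
    have hstep : (chiSet G S : ℝ) / 2 - 8 ≤ (chiSet G H : ℝ) := by
      have h1 : (n : ℝ) + 1 ≤ chiSet G H := by exact_mod_cast lt_chiSet_iff.2 hH
      have h2 : (chiSet G S : ℝ) ≤ 2 * (n + 7) := by exact_mod_cast hn2
      linarith
    obtain ⟨P, hPs, hPo, hPl⟩ := ih H t hl.conn hl.t_mem (by
      rcases ℓ with _ | ℓ
      · exact Or.inl rfl
      · exact Or.inr (h.trans (iterate_mono ℓ hstep)))
    obtain ⟨Q, hQs, hQo, hQl⟩ := prepend hl P hPs hPo
    refine ⟨Q, hQs, hQo, ?_⟩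
    rw [hQl]
    exact (iterate_mono ℓ hstep).trans hPl

end PCPProof

/-- With `h(x) = x/2 - 8`: if `G ∈ C_{3,5,2k≥6}` is connected with
`χ(G) ≥ δ` and `h^{(ℓ-1)}(δ) ≥ 18`, then from any vertex `x₁` one can grow a PCP of
order `ℓ` with origin `x₁` and leftovers at least `h^{(ℓ)}(δ)`. -/
theorem pcp_order_ell_exists (V : Type) [Fintype V] (G : SimpleGraph V)
    (hconn : G.Connected) (h3 : G.CliqueFree 3) (h5 : NoInducedCycle G 5)
    (heven : ∀ n : ℕ, 6 ≤ n → Even n → NoInducedCycle G n)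
    (ℓ δ : ℕ) (hℓ : 0 < ℓ) (hδpos : 0 < δ) (hδ : δ ≤ chi G)
    (hit : (18 : ℝ) ≤ (fun x : ℝ => x / 2 - 8)^[ℓ - 1] (δ : ℝ)) (x₁ : V) :
    ∃ P : PCP G ℓ, P.origin = x₁ ∧
      (fun x : ℝ => x / 2 - 8)^[ℓ] (δ : ℝ) ≤ (P.leftovers : ℝ) := by
  have tri : ∀ x y z, G.Adj x y → G.Adj y z → G.Adj x z → False := by
    classical
    intro x y z hxy hyz hxz
    exact h3 {x, y, z} (is3Clique_triple_iff.2 ⟨hxy, hxz, hyz⟩)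
  have hS : (G.induce Set.univ).Connected := (induceUnivIso G).connected_iff.2 hconn
  have hchi : δ ≤ chiSet G Set.univ := by
    classical
    refine hδ.trans (ENat.toNat_le_toNat ?_
      (chromaticNumber_ne_top_iff_exists.2 ⟨_, colorable_of_fintype _⟩))
    exact chromaticNumber_mono_of_hom (induceUnivIso G).symm.toHom
  have hchi' : (δ : ℝ) ≤ chiSet G Set.univ := by exact_mod_cast hchi
  obtain ⟨P, -, hPo, hPl⟩ := PCPProof.exists_pcp tri h5 ℓ Set.univ x₁ hS (Set.mem_univ _)
    (Or.inr (hit.trans (PCPProof.iterate_mono _ hchi')))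
  exact ⟨P, hPo, (PCPProof.iterate_mono ℓ hchi').trans hPl⟩
end

section
/- Let G be a graph containing no triangle, no induced cycle of length 5, and no induced cycle of even length at least 6, let v be a vertex of G and (N_0, N_1, …) be the v-levelling. For every k ≥ 1, if S ⊆ N_{k−1} is a stable set, then χ(N(S) ∩ N_k) ≤ 52. -/
/-!
The proof gives more than the stated bound: `N(S) ∩ N_k =: T` induces a bipartite graph.

Two distinct vertices `s, t ∈ S` are non-adjacent and are joined by an induced path of some length
`r ≥ 2` whose inner vertices lie in levels below `k - 1`, hence have no neighbour in `T`. An induced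
path in `T` of length `m` meeting `N(t)` exactly in its first vertex and `N(s)` exactly in its last
one therefore closes up to an induced cycle of length `m + r + 2`, so `m + r` is odd or equal to
`2`, and `m + r ≠ 3` (`exists_closing_length`).

If `T` is not bipartite, it contains a closed walk of odd length. Among all walks in `T` of odd
length whose two (possibly equal) ends have a common neighbour in `S`, take one, `w_0, …, w_d`, with
`d` minimum. Minimality makes it an induced cycle or an induced path.

* If the minimum is attained by an odd cycle, its length is at least `5`, and every vertex of `S`
  has at most one neighbour on it. For `s` adjacent to `w_0` and `s₂` adjacent to `w_2`, the arcs
  between `w_0` and `w_2` have lengths `2` and `d - 2` of different parity, and both close up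
  through the same upper path, which is impossible.
* Otherwise it is an induced path, and some `s ∈ S` is adjacent to exactly its two ends. Let
  `t ∈ S` be adjacent to `w_1`. Closing up the edge `w_0 w_1` shows that `r` is even and `r ≥ 4`;
  hence `s` and `t` have no common neighbour in `T`, so `t` is not adjacent to `w_d`. Let `w_j` be
  the last neighbour of `t`. If `j` is odd, the part from `w_j` to `w_d` has even length and closes
  up to an even induced cycle. If `j` is even, the part from `w_1` to `w_j` is a shorter walk of odd
  length whose ends have the common neighbour `t`, contradicting minimality.
-/

open SimpleGraph

/-! ### Walks of prescribed length -/

/-- There is a walk of length `n` from `x` to `y` in `H`. -/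
def WalkLen {W : Type} (H : SimpleGraph W) (n : ℕ) (x y : W) : Prop :=
  ∃ p : H.Walk x y, p.length = n

lemma WalkLen.trans {W : Type} {H : SimpleGraph W} {m n : ℕ} {x y z : W}
    (h₁ : WalkLen H m x y) (h₂ : WalkLen H n y z) : WalkLen H (m + n) x z := by
  obtain ⟨p, rfl⟩ := h₁
  obtain ⟨q, rfl⟩ := h₂
  exact ⟨p.append q, by simp⟩

lemma WalkLen.symm {W : Type} {H : SimpleGraph W} {n : ℕ} {x y : W}
    (h : WalkLen H n x y) : WalkLen H n y x := by
  obtain ⟨p, rfl⟩ := h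
  exact ⟨p.reverse, by simp⟩

lemma WalkLen.of_adj {W : Type} {H : SimpleGraph W} {x y : W} (h : H.Adj x y) :
    WalkLen H 1 x y := ⟨h.toWalk, by simp⟩

lemma walkLen_getVert {W : Type} {H : SimpleGraph W} {x y : W} (p : H.Walk x y) {i j : ℕ}
    (hij : i ≤ j) (hj : j ≤ p.length) :
    WalkLen H (j - i) (p.getVert i) (p.getVert j) := by
  have h : (p.drop i).getVert (j - i) = p.getVert j := by
    rw [Walk.drop_getVert, Nat.add_sub_cancel' hij]
  refine ⟨((p.drop i).take (j - i)).copy rfl h, ?_⟩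
  simp
  omega

/-! ### Induced paths and cycles -/

/-- `u 0, …, u r` are the vertices, in order, of an induced path of `G` (with `r` edges);
the values of `u` beyond `r` are irrelevant. -/
def IndPath {V : Type} (G : SimpleGraph V) (u : ℕ → V) (r : ℕ) : Prop :=
  ∀ i j, i < j → j ≤ r → u i ≠ u j ∧ (G.Adj (u i) (u j) ↔ j = i + 1)

/-- Two disjoint induced paths whose only connecting edges join their ends crosswise form an
induced cycle. -/
lemma cycle_of_two_paths {V : Type} {G : SimpleGraph V} {a b : ℕ → V} {r m : ℕ}
    (ha : IndPath G a r) (hb : IndPath G b m) (hrm : 1 ≤ r + m)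
    (hne : ∀ i ≤ r, ∀ j ≤ m, a i ≠ b j)
    (hadj : ∀ i ≤ r, ∀ j ≤ m, G.Adj (a i) (b j) ↔ (i = r ∧ j = 0) ∨ (i = 0 ∧ j = m)) :
    Nonempty (cycleGraph (r + m + 2) ↪g G) := by
  set c : ℕ → V := fun i => if i ≤ r then a i else b (i - (r + 1)) with hc
  have key : ∀ i j, i < j → j < r + m + 2 → c i ≠ c j ∧
      (G.Adj (c i) (c j) ↔ j = i + 1 ∨ (i = 0 ∧ j = r + m + 1)) := by
    intro i j hij hj
    simp only [hc]
    by_cases h1 : j ≤ r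
    · have h2 : i ≤ r := by omega
      rw [if_pos h1, if_pos h2]
      obtain ⟨h3, h4⟩ := ha i j hij h1
      refine ⟨h3, h4.trans ?_⟩
      omega
    · by_cases h2 : i ≤ r
      · rw [if_neg h1, if_pos h2]
        refine ⟨hne i h2 _ (by omega), (hadj i h2 _ (by omega)).trans ?_⟩
        omega
      · rw [if_neg h1, if_neg h2]
        obtain ⟨h3, h4⟩ := hb (i - (r + 1)) (j - (r + 1)) (by omega) (by omega)
        refine ⟨h3, h4.trans ?_⟩
        omega
  have hcyc : ∀ i j : Fin (r + m + 2), i < j → ((cycleGraph (r + m + 2)).Adj i j ↔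
      j.val = i.val + 1 ∨ (i.val = 0 ∧ j.val = r + m + 1)) := by
    intro i j hij
    rw [cycleGraph_adj', Fin.sub_val_of_le hij.le, Fin.coe_sub_iff_lt.mpr hij]
    have := j.isLt
    have : i.val < j.val := hij
    omega
  refine ⟨⟨⟨fun i => c i.val, ?_⟩, ?_⟩⟩
  · intro i j h
    rcases lt_trichotomy i j with hij | hij | hij
    · exact absurd h (key i j hij j.isLt).1
    · exact hij
    · exact absurd h.symm (key j i hij i.isLt).1
  · intro i j
    change G.Adj (c i) (c j) ↔ _
    rcases lt_trichotomy i j with hij | hij | hij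
    · rw [(key i j hij j.isLt).2, hcyc i j hij]
    · subst hij
      simp
    · rw [G.adj_comm, SimpleGraph.adj_comm (cycleGraph _), (key j i hij i.isLt).2, hcyc j i hij]

/-- A shortest walk inside an induced subgraph traces an induced path. -/
lemma exists_indPath {V : Type} {G : SimpleGraph V} {U : Set V} {x y : U}
    (h : (G.induce U).Reachable x y) :
    ∃ (r : ℕ) (u : ℕ → V), u 0 = x ∧ u r = y ∧ (∀ i, u i ∈ U) ∧ IndPath G u r := by
  obtain ⟨p, hp⟩ := h.exists_walk_length_eq_dist
  have hmin : ∀ n, WalkLen (G.induce U) n x y → p.length ≤ n := by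
    rintro n ⟨q, rfl⟩
    rw [hp]
    exact dist_le q
  refine ⟨p.length, fun i => (p.getVert i : V), by simp, by simp, fun i => (p.getVert i).2, ?_⟩
  intro i j hij hj
  have h1 := walkLen_getVert p (Nat.zero_le i) (by omega)
  have h2 := walkLen_getVert p hj le_rfl
  rw [Walk.getVert_zero] at h1
  rw [Walk.getVert_length] at h2
  refine ⟨fun h => ?_, fun h => ?_, fun h => ?_⟩
  · rw [Subtype.coe_injective h] at h1
    have := hmin _ (h1.trans h2)
    omega
  · have h3 : (G.induce U).Adj (p.getVert i) (p.getVert j) := h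
    have := hmin _ ((h1.trans (WalkLen.of_adj h3)).trans h2)
    omega
  · subst h
    exact p.adj_getVert_succ (by omega)

/-! ### Paths through the upper levels -/

/-- Two vertices of a level are joined by an induced path whose inner vertices all lie in
strictly lower levels. -/
lemma exists_upper_path {V : Type} {G : SimpleGraph V} {v : V} {l : ℕ} {s t : V}
    (hs : s ∈ level G v l) (ht : t ∈ level G v l) :
    ∃ (r : ℕ) (u : ℕ → V), u 0 = s ∧ u r = t ∧ IndPath G u r ∧
      ∀ i, 0 < i → i < r → G.Reachable v (u i) ∧ G.dist v (u i) < l := by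
  set U : Set V := {x | x = s ∨ x = t ∨ (G.Reachable v x ∧ G.dist v x < l)} with hU
  have hvU : v ∈ U := by
    rcases Nat.eq_zero_or_pos l with h0 | h0
    · left
      have h1 := hs.2
      rw [h0] at h1
      exact hs.1.dist_eq_zero_iff.mp h1
    · right; right
      exact ⟨Reachable.refl v, by simpa using h0⟩
  have hreach : ∀ x (hx : x ∈ U), x ∈ level G v l →
      (G.induce U).Reachable ⟨v, hvU⟩ ⟨x, hx⟩ := by
    intro x hx hxl
    obtain ⟨p, hp⟩ := hxl.1.exists_walk_length_eq_dist
    have hp' : ∀ y ∈ p.support, y ∈ U := by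
      intro y hy
      obtain ⟨i, rfl, hi⟩ := Walk.mem_support_iff_exists_getVert.mp hy
      rcases Nat.lt_or_ge i p.length with h | h
      · right; right
        refine ⟨(p.take i).reachable, lt_of_le_of_lt (dist_le (p.take i)) ?_⟩
        have := hxl.2
        simp
        omega
      · have : i = p.length := by omega
        rw [this, Walk.getVert_length]
        exact hx
    exact (p.induce U hp').reachable
  have hsU : s ∈ U := Or.inl rfl
  have htU : t ∈ U := Or.inr (Or.inl rfl)
  obtain ⟨r, u, h0, hr, hmem, hind⟩ :=
    exists_indPath ((hreach s hsU hs).symm.trans (hreach t htU ht))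
  refine ⟨r, u, h0, hr, hind, fun i hi hir => ?_⟩
  rcases hmem i with h | h | h
  · exact absurd (h0.trans h.symm) (hind 0 i hi hir.le).1
  · exact absurd (h.trans hr.symm) (hind i r hir le_rfl).1
  · exact h

/-- Closing paths through the upper levels: for distinct `s, t ∈ S` there is a number `r`, the
length of an induced `s`-`t` path above level `k - 1`, that controls the length `m` of every
induced path in level `k` meeting `N(t)` exactly in its first and `N(s)` exactly in its last
vertex, since the two paths together form an induced cycle of length `m + r + 2`. -/
lemma exists_closing_length {V : Type} {G : SimpleGraph V}
    (h5 : NoInducedCycle G 5) (heven : ∀ n : ℕ, 6 ≤ n → Even n → NoInducedCycle G n)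
    {v : V} {k : ℕ} (hk : 1 ≤ k) {S : Set V} (hS : S ⊆ level G v (k - 1))
    (hstable : S.Pairwise fun a b => ¬ G.Adj a b)
    {s t : V} (hs : s ∈ S) (ht : t ∈ S) (hst : s ≠ t) :
    ∃ r, 2 ≤ r ∧ ∀ (m : ℕ) (b : ℕ → V), IndPath G b m → (∀ i ≤ m, b i ∈ level G v k) →
      (∀ i ≤ m, G.Adj t (b i) ↔ i = 0) → (∀ i ≤ m, G.Adj s (b i) ↔ i = m) →
      (Odd (m + r) ∨ m + r = 2) ∧ m + r ≠ 3 := by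
  obtain ⟨r, u, h0, hr, hind, hlow⟩ := exists_upper_path (hS hs) (hS ht)
  have hr2 : 2 ≤ r := by
    by_contra! hlt
    interval_cases r
    · exact hst (h0.symm.trans hr)
    · have := ((hind 0 1 (by omega) le_rfl).2).mpr rfl
      rw [h0, hr] at this
      exact hstable hs ht hst this
  refine ⟨r, hr2, fun m b hb hbl hbt hbs => ?_⟩
  have hne : ∀ i ≤ r, ∀ j ≤ m, u i ≠ b j := by
    intro i hi j hj h
    have h1 := (hbl j hj).2
    have h2 : G.dist v (u i) ≤ k - 1 := by
      rcases Nat.eq_zero_or_pos i with h3 | h3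
      · rw [h3, h0, (hS hs).2]
      · rcases Nat.lt_or_ge i r with h4 | h4
        · exact (hlow i h3 h4).2.le
        · rw [le_antisymm hi h4, hr, (hS ht).2]
    rw [h] at h2
    omega
  have hadj : ∀ i ≤ r, ∀ j ≤ m, G.Adj (u i) (b j) ↔ (i = r ∧ j = 0) ∨ (i = 0 ∧ j = m) := by
    intro i hi j hj
    rcases Nat.eq_zero_or_pos i with h3 | h3
    · rw [h3, h0, hbs j hj]
      omega
    · rcases Nat.lt_or_ge i r with h4 | h4
      · refine ⟨fun h => ?_, fun h => by omega⟩
        have h1 := (hbl j hj).2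
        obtain ⟨h5, h6⟩ := hlow i h3 h4
        obtain ⟨q, hq⟩ := h5.exists_walk_length_eq_dist
        have h7 := dist_le (q.concat h)
        rw [Walk.length_concat] at h7
        omega
      · rw [le_antisymm hi h4, hr, hbt j hj]
        omega
  obtain ⟨f⟩ := cycle_of_two_paths hind hb (by omega) hne hadj
  constructor
  · by_contra! hcon
    obtain ⟨h1, h2⟩ := hcon
    rw [Nat.not_odd_iff_even] at h1
    have h3 : Even (r + m + 2) := by
      rw [add_comm r m]
      exact h1.add even_two
    have h4 : 6 ≤ r + m + 2 := by
      obtain ⟨a, ha⟩ := h1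
      omega
    exact (heven _ h4 h3).false f
  · intro h
    have : r + m + 2 = 5 := by omega
    rw [this] at f
    exact h5.false f

/-! ### The shadow of a stable set -/

/-- The set `N(S) ∩ N_k` already induces a bipartite graph. -/
lemma stable_shadow_two_colorable {V : Type} {G : SimpleGraph V}
    (h3 : G.CliqueFree 3) (h5 : NoInducedCycle G 5)
    (heven : ∀ n : ℕ, 6 ≤ n → Even n → NoInducedCycle G n)
    {v : V} {k : ℕ} (hk : 1 ≤ k) {S : Set V} (hS : S ⊆ level G v (k - 1))
    (hstable : S.Pairwise fun a b => ¬ G.Adj a b) :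
    (G.induce (neighborsOf G S ∩ level G v k)).Colorable 2 := by
  classical
  by_contra hcol
  rw [two_colorable_iff_forall_loop_even] at hcol
  push Not at hcol
  set T : Set V := neighborsOf G S ∩ level G v k with hT
  set H := G.induce T with hH
  have hpar : ∀ x : T, ∃ s ∈ S, G.Adj s x := fun x => x.2.1
  have htri : ∀ a b c : V, G.Adj a b → G.Adj b c → G.Adj a c → False := by
    intro a b c hab hbc hac
    exact h3 {a, b, c} (is3Clique_triple_iff.mpr ⟨hab, hac, hbc⟩)
  -- `d` is the least odd length of a walk in `T` whose ends have a common neighbour in `S`.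
  -- Closed walks count, since every vertex of `T` has a neighbour in `S`.
  have hex : ∃ d, Odd d ∧ ∃ s ∈ S, ∃ x y : T, G.Adj s x ∧ G.Adj s y ∧ WalkLen H d x y := by
    obtain ⟨x, p, hp⟩ := hcol
    obtain ⟨s, hs, hsx⟩ := hpar x
    exact ⟨p.length, Nat.not_even_iff_odd.mp hp, s, hs, x, x, hsx, hsx, p, rfl⟩
  obtain ⟨d, ⟨hdodd, hdex⟩, hdmin⟩ : ∃ d, (Odd d ∧ ∃ s ∈ S, ∃ x y : T,
      G.Adj s x ∧ G.Adj s y ∧ WalkLen H d x y) ∧ ∀ e, Odd e → ∀ s ∈ S, ∀ x y : T,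
      G.Adj s x → G.Adj s y → WalkLen H e x y → d ≤ e :=
    ⟨Nat.find hex, Nat.find_spec hex, fun e he s hs x y hx hy hw =>
      Nat.find_min' hex ⟨he, s, hs, x, y, hx, hy, hw⟩⟩
  have hclosed : ∀ e, Odd e → ∀ x : T, WalkLen H e x x → d ≤ e := by
    intro e he x hw
    obtain ⟨s, hs, hsx⟩ := hpar x
    exact hdmin e he s hs x x hsx hsx hw
  have hd3 : 3 ≤ d := by
    by_contra! hlt
    have hd1 : d = 1 := by
      obtain ⟨a, ha⟩ := hdodd
      omega
    obtain ⟨s, hs, x, y, hsx, hsy, p, hp⟩ := hdex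
    rw [hd1] at hp
    exact htri s x y hsx (p.adj_of_length_eq_one hp : H.Adj x y) hsy
  have hlev : ∀ x : T, (x : V) ∈ level G v k := fun x => x.2.2
  -- A walk realising the minimum repeats no vertex, except that its two ends may coincide.
  have hinj : ∀ (x y : T) (p : H.Walk x y), p.length = d → ∀ s ∈ S, G.Adj s x → G.Adj s y →
      ∀ i j, i < j → j ≤ d → p.getVert i = p.getVert j → i = 0 ∧ j = d := by
    intro x y p hp s hs hsx hsy i j hij hj heq
    have hm := walkLen_getVert p hij.le (by omega)
    rcases Nat.even_or_odd (j - i) with he | ho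
    · have h1 := walkLen_getVert p (Nat.zero_le i) (by omega)
      have h2 := walkLen_getVert p (i := j) (j := p.length) (by omega) le_rfl
      rw [Walk.getVert_zero, heq] at h1
      rw [Walk.getVert_length] at h2
      have := hdmin _ (by rw [Nat.odd_iff] at *; rw [Nat.even_iff] at *; omega)
        s hs x y hsx hsy (h1.trans h2)
      omega
    · rw [heq] at hm
      have := hclosed _ ho _ hm
      omega
  -- A chord of such a walk must cut off all edges but one and then close up an odd cycle.
  have hchord : ∀ (x y : T) (p : H.Walk x y), p.length = d → ∀ s ∈ S, G.Adj s x → G.Adj s y →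
      ∀ i j, i < j → j ≤ d → H.Adj (p.getVert i) (p.getVert j) →
      j = i + 1 ∨ (j + 1 = i + d ∧ ∃ z, WalkLen H d z z) := by
    intro x y p hp s hs hsx hsy i j hij hj hadj
    have hm := walkLen_getVert p hij.le (by omega)
    rcases Nat.even_or_odd (j - i) with he | ho
    · have hc := hm.trans (WalkLen.of_adj hadj.symm)
      have := hclosed _ he.add_one _ hc
      have hnd : j - i ≠ d := by
        rintro h
        rw [h] at he
        exact (Nat.not_even_iff_odd.mpr hdodd) he
      have h4 : j - i + 1 = d := by omega
      rw [h4] at hc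
      exact Or.inr ⟨by omega, _, hc⟩
    · left
      have h1 := walkLen_getVert p (Nat.zero_le i) (by omega)
      have h2 := walkLen_getVert p (i := j) (j := p.length) (by omega) le_rfl
      rw [Walk.getVert_zero] at h1
      rw [Walk.getVert_length] at h2
      have := hdmin _ (by rw [Nat.odd_iff] at *; omega)
        s hs x y hsx hsy ((h1.trans (WalkLen.of_adj hadj)).trans h2)
      omega
  have hodd : ∀ (x y : T) (p : H.Walk x y), p.length = d → ∀ t ∈ S,
      ∀ i j, i < j → j ≤ d → G.Adj t (p.getVert i) → G.Adj t (p.getVert j) → Odd (j - i) →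
      i = 0 ∧ j = d := by
    intro x y p hp t ht i j hij hj hi hj' ho
    have := hdmin _ ho t ht _ _ hi hj' (walkLen_getVert p hij.le (by omega))
    omega
  by_cases hcl : ∃ z, WalkLen H d z z
  · -- The minimum is attained by an odd cycle. Each vertex of `S` has at most one neighbour on
    -- it, and for the neighbours in `S` of two vertices at distance 2 on the cycle, one of the
    -- two arcs closes to an even induced cycle.
    obtain ⟨z, p, hp⟩ := hcl
    have hp0 : p.getVert 0 = z := Walk.getVert_zero p
    have hpd : p.getVert d = z := by rw [← hp]; exact Walk.getVert_length p
    have h0d : p.getVert d = p.getVert 0 := hpd.trans hp0.symm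
    obtain ⟨s, hs, hsz⟩ := hpar z
    have hd5 : 5 ≤ d := by
      by_contra! hlt
      have hd' : d = 3 := by
        obtain ⟨a, ha⟩ := hdodd
        omega
      have e0 := p.adj_getVert_succ (i := 0) (by omega)
      have e1 := p.adj_getVert_succ (i := 1) (by omega)
      have e2 := p.adj_getVert_succ (i := 2) (by omega)
      rw [hd'] at h0d
      rw [h0d] at e2
      exact htri _ _ _ e0 e1 e2.symm
    have huniq : ∀ t ∈ S, ∀ i j, i < j → j < d → G.Adj t (p.getVert i) →
        G.Adj t (p.getVert j) → False := by
      intro t ht i j hij hj hi hj'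
      rcases Nat.even_or_odd (j - i) with he | ho
      · have h1 := walkLen_getVert p (Nat.zero_le i) (by omega)
        have h2 := walkLen_getVert p (i := j) (j := d) (by omega) (by omega)
        rw [hp0] at h1
        rw [hpd] at h2
        have := hdmin _ (by rw [Nat.odd_iff] at *; rw [Nat.even_iff] at *; omega)
          t ht _ _ hj' hi (h2.trans h1)
        rw [Nat.even_iff] at he
        omega
      · have := hodd z z p hp t ht i j hij hj.le hi hj' ho
        omega
    obtain ⟨s₂, hs₂, hsz₂⟩ := hpar (p.getVert 2)
    have hsz0 : G.Adj s (p.getVert 0) := by rw [hp0]; exact hsz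
    have hszd : G.Adj s (p.getVert d) := by rw [hpd]; exact hsz
    have hne : s₂ ≠ s := by
      rintro rfl
      exact huniq s₂ hs₂ 0 2 (by omega) (by omega) hsz0 hsz₂
    obtain ⟨r, hr, hclose⟩ := exists_closing_length h5 heven hk hS hstable hs₂ hs hne
    have adj_s : ∀ i ≤ d, G.Adj s (p.getVert i) ↔ i = 0 ∨ i = d := by
      intro i hi
      constructor
      · intro h
        by_contra! hcon
        exact huniq s hs 0 i (by omega) (by omega) hsz0 h
      · rintro (rfl | rfl)
        · exact hsz0
        · exact hszd
    have adj_s₂ : ∀ i ≤ d, G.Adj s₂ (p.getVert i) ↔ i = 2 := by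
      intro i hi
      constructor
      · intro h
        rcases lt_trichotomy i 2 with h1 | h1 | h1
        · exact (huniq s₂ hs₂ i 2 h1 (by omega) h hsz₂).elim
        · exact h1
        · rcases Nat.lt_or_ge i d with h2 | h2
          · exact (huniq s₂ hs₂ 2 i h1 h2 hsz₂ h).elim
          · rw [le_antisymm hi h2, h0d] at h
            exact (huniq s₂ hs₂ 0 2 (by omega) (by omega) h hsz₂).elim
      · rintro rfl
        exact hsz₂
    have short := (hclose 2 (fun i => p.getVert i) (by
        intro i j hij hj
        refine ⟨fun h => ?_, fun h => ?_, fun h => ?_⟩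
        · have := hinj z z p hp s hs hsz hsz i j hij (by omega) (Subtype.coe_injective h)
          omega
        · have := hchord z z p hp s hs hsz hsz i j hij (by omega) h
          omega
        · subst h
          exact p.adj_getVert_succ (by omega))
      (fun i _ => hlev _)
      (fun i hi => (adj_s i (by omega)).trans (by omega))
      (fun i hi => adj_s₂ i (by omega))).1
    have long := (hclose (d - 2) (fun i => p.getVert (d - i)) (by
        intro i j hij hj
        refine ⟨fun h => ?_, fun h => ?_, fun h => ?_⟩
        · have := hinj z z p hp s hs hsz hsz (d - j) (d - i) (by omega) (by omega)
            (Subtype.coe_injective h.symm)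
          omega
        · have := hchord z z p hp s hs hsz hsz (d - j) (d - i) (by omega) (by omega)
            (SimpleGraph.Adj.symm h)
          omega
        · have h1 := p.adj_getVert_succ (i := d - j) (by omega)
          have h2 : d - j + 1 = d - i := by omega
          rw [h2] at h1
          exact SimpleGraph.Adj.symm h1)
      (fun i _ => hlev _)
      (fun i hi => (adj_s (d - i) (by omega)).trans (by omega))
      (fun i hi => (adj_s₂ (d - i) (by omega)).trans (by omega))).1
    rw [Nat.odd_iff] at *
    omega
  · -- The minimum is attained by an induced path with distinct ends, both adjacent to `s`.
    obtain ⟨s, hs, x, y, hsx, hsy, p, hp⟩ := hdex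
    have hp0 : p.getVert 0 = x := Walk.getVert_zero p
    have hpd : p.getVert d = y := by rw [← hp]; exact Walk.getVert_length p
    have hind : ∀ i j, i < j → j ≤ d → (p.getVert i : V) ≠ p.getVert j ∧
        (G.Adj (p.getVert i) (p.getVert j) ↔ j = i + 1) := by
      intro i j hij hj
      refine ⟨fun h => ?_, fun h => ?_, fun h => ?_⟩
      · obtain ⟨h1, h2⟩ := hinj x y p hp s hs hsx hsy i j hij hj (Subtype.coe_injective h)
        have h3 : x = y := by
          rw [h1, h2, hp0, hpd] at h
          exact Subtype.coe_injective h
        subst h3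
        exact hcl ⟨x, p, hp⟩
      · rcases hchord x y p hp s hs hsx hsy i j hij hj h with h1 | h1
        · exact h1
        · exact absurd h1.2 hcl
      · subst h
        exact p.adj_getVert_succ (by omega)
    have hsz0 : G.Adj s (p.getVert 0) := by rw [hp0]; exact hsx
    have hszd : G.Adj s (p.getVert d) := by rw [hpd]; exact hsy
    have adj_s : ∀ i ≤ d, G.Adj s (p.getVert i) ↔ i = 0 ∨ i = d := by
      intro i hi
      constructor
      · intro h
        by_contra! hcon
        rcases Nat.even_or_odd i with he | ho
        · have := hodd x y p hp s hs i d (by omega) le_rfl h hszd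
            (by rw [Nat.odd_iff] at *; rw [Nat.even_iff] at *; omega)
          omega
        · have := hodd x y p hp s hs 0 i (by omega) hi hsz0 h (by simpa using ho)
          omega
      · rintro (rfl | rfl)
        · exact hsz0
        · exact hszd
    -- `t` is a neighbour in `S` of the second vertex of the path.
    obtain ⟨t, ht, ht1⟩ := hpar (p.getVert 1)
    have hst : s ≠ t := by
      rintro rfl
      have := (adj_s 1 (by omega)).mp ht1
      omega
    have h01 : G.Adj (p.getVert 0) (p.getVert 1) := p.adj_getVert_succ (by omega)
    have ht0 : ¬ G.Adj t (p.getVert 0) := fun h => htri _ _ _ h h01 ht1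
    obtain ⟨r, hr, hclose⟩ := exists_closing_length h5 heven hk hS hstable hs ht hst
    -- The first edge closes to an odd cycle other than a 5-cycle, so `r` is even and `r ≥ 4`.
    have hedge := hclose 1 (fun i => p.getVert (1 - i)) (by
        intro i j hij hj
        obtain ⟨rfl, rfl⟩ : i = 0 ∧ j = 1 := by omega
        exact ⟨h01.ne', iff_of_true h01.symm rfl⟩)
      (fun i _ => hlev _)
      (by
        intro i hi
        interval_cases i
        · exact iff_of_true ht1 rfl
        · exact iff_of_false ht0 (by omega))
      (fun i hi => (adj_s (1 - i) (by omega)).trans (by omega))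
    -- A common neighbour of `s` and `t` would close to an even cycle of length `r + 2`.
    have htd : ¬ G.Adj t (p.getVert d) := by
      intro h
      have := (hclose 0 (fun _ => p.getVert d) (by intro i j hij hj; omega)
        (fun i _ => hlev _)
        (fun i hi => iff_of_true h (by omega))
        (fun i hi => iff_of_true hszd (by omega))).1
      rw [Nat.odd_iff] at *
      omega
    -- `j` is the last neighbour of `t` on the path.
    set j := Nat.findGreatest (fun i => G.Adj t (p.getVert i)) d with hj
    have hj1 : 1 ≤ j := Nat.le_findGreatest (by omega) ht1
    have hjd : j ≤ d := Nat.findGreatest_le d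
    have hjt : G.Adj t (p.getVert j) :=
      Nat.findGreatest_spec (P := fun i => G.Adj t (p.getVert i)) (m := 1) (by omega) ht1
    have hjlast : ∀ i, j < i → i ≤ d → ¬ G.Adj t (p.getVert i) :=
      fun i h1 h2 => Nat.findGreatest_is_greatest h1 h2
    have hjned : j ≠ d := by
      intro h
      rw [h] at hjt
      exact htd hjt
    rcases Nat.even_or_odd j with he | ho
    · have := hodd x y p hp t ht 1 j (by rw [Nat.even_iff] at he; omega) hjd ht1 hjt
        (by rw [Nat.odd_iff] at *; rw [Nat.even_iff] at *; omega)
      omega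
    · have := (hclose (d - j) (fun i => p.getVert (j + i)) (by
          intro a b hab hb
          obtain ⟨h1, h2⟩ := hind (j + a) (j + b) (by omega) (by omega)
          exact ⟨h1, h2.trans (by omega)⟩)
        (fun i _ => hlev _)
        (by
          intro i hi
          constructor
          · intro h
            by_contra hcon
            exact hjlast (j + i) (by omega) (by omega) h
          · rintro rfl
            exact hjt)
        (fun i hi => (adj_s (j + i) (by omega)).trans (by omega))).1
      rw [Nat.odd_iff] at *
      omega

/-- Let `G ∈ C_{3,5,2k≥6}`, `v` a vertex and `(N_0, N_1, …)` the
`v`-levelling. For every `k ≥ 1` and every stable set `S ⊆ N_{k-1}`,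
`χ(N(S) ∩ N_k) ≤ 52`. -/
theorem stable_shadow_bounded (V : Type) [Fintype V] (G : SimpleGraph V)
    (h3 : G.CliqueFree 3) (h5 : NoInducedCycle G 5)
    (heven : ∀ n : ℕ, 6 ≤ n → Even n → NoInducedCycle G n)
    (v : V) (k : ℕ) (hk : 1 ≤ k)
    (S : Set V) (hS : S ⊆ level G v (k - 1))
    (hstable : S.Pairwise fun a b => ¬ G.Adj a b) :
    chiSet G (neighborsOf G S ∩ level G v k) ≤ 52 := by
  have h := (stable_shadow_two_colorable h3 h5 heven hk hS hstable).chromaticNumber_le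
  exact (ENat.toNat_le_of_le_natCast h).trans (by norm_num)
end
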